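/- Assume the stated hypotheses on Ω, and let M > 0. For every ε > 0 there exists a constant C > 0, depending only on ε, M, Ω, n, p, with the following property: for every function f : Ω → ℝ that is bounded by M and Lipschitz with constant at most M, and every u ∈ C²(Ω) ∩ C(Ω̄) satisfying −Δu = |∇u|^p + f in Ω and u = 0 on ∂Ω, one has |∇u(x)| ≤ (1+ε) d_p δ(x)^{−β} + C for all x ∈ Ω. -/

import Mathlib

/-!
Bernstein's method on balls gives, after scaling, the crude bound `‖∇ u‖ ≤ C δ ^ (-β)` with some
constant `C`, so only the behaviour near the boundary matters. There one blows up: if `z` is the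
boundary point nearest to `x`, with inner unit normal `ν`, then the rescaled function
`v y = l ^ (β - 1) u (z + l (y + η ν))` solves the same equation on a large half ball with a source
of size at most `η`, inherits the crude gradient bound, and is almost nonnegative by comparison with
a radial barrier in the exterior ball.

For such `v`, three applications of the maximum principle, with explicit test functions in place of
compactness, control `∇ v ν` up to `ε`. Comparison of the normal derivative with `a y_ν ^ (-β)`
for `a` slightly above `β ^ β` bounds it by `(1 + ε) β ^ β`. Comparison of `v` with its translates
gives `v y ≤ v (y + τ e) + ε` whenever `⟪ν, e⟫ ≥ 0`. Doubling the variables `(y, τ)` near `(ν, 0)`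
turns this into `⟪∇ v ν, e⟫ ≥ -ε`, so that the tangential part of `∇ v ν` is negligible as well.
-/

open Set Metric Filter RealInnerProductSpace

noncomputable section

/-- A set `Ω ⊆ ℝⁿ` has boundary of class `C²`: near each boundary point, `Ω` is the strict
sublevel set of a `C²` function with nonvanishing gradient (equivalently, after a rigid motion,
the boundary is locally the graph of a `C²` function with `Ω` strictly on one side). -/
def IsC2Boundary {n : ℕ} (Ω : Set (EuclideanSpace ℝ (Fin n))) : Prop :=
  ∀ x ∈ frontier Ω, ∃ f : EuclideanSpace ℝ (Fin n) → ℝ, ∃ U ∈ nhds x,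
    ContDiffOn ℝ 2 f U ∧ (∀ y ∈ U, fderiv ℝ f y ≠ 0) ∧
    U ∩ Ω = U ∩ {y | f y < 0} ∧ U ∩ frontier Ω = U ∩ {y | f y = 0}

/-- The Laplacian of `u : ℝⁿ → ℝ`, as the sum of the second derivatives
`∂²u/∂xᵢ²` (computed via iterated Fréchet derivatives). -/
def lap {n : ℕ} (u : EuclideanSpace ℝ (Fin n) → ℝ) (x : EuclideanSpace ℝ (Fin n)) : ℝ :=
  ∑ i : Fin n, fderiv ℝ (fun y => fderiv ℝ u y (EuclideanSpace.single i (1 : ℝ))) x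
    (EuclideanSpace.single i (1 : ℝ))

open scoped Gradient Laplacian Topology

variable {E : Type*} [NormedAddCommGroup E] [InnerProductSpace ℝ E]

lemma norm_rpow_add_inner_le {p : ℝ} (hp : 1 ≤ p) (P X : E) :
    ‖P‖ ^ p + p * ‖P‖ ^ (p - 2) * ⟪P, X - P⟫ ≤ ‖X‖ ^ p := by
  rcases eq_or_ne P 0 with rfl | hP
  · simpa [Real.zero_rpow (by linarith : p ≠ 0)] using Real.rpow_nonneg (norm_nonneg X) p
  have hP0 : 0 < ‖P‖ := norm_pos_iff.mpr hP
  have hinner : ⟪P, X - P⟫ ≤ ‖P‖ ^ 2 * (‖X‖ / ‖P‖ - 1) := by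
    rw [inner_sub_right, real_inner_self_eq_norm_sq, mul_sub, mul_one, sq, mul_assoc,
      mul_div_cancel₀ _ hP0.ne']
    linarith [real_inner_le_norm P X]
  have hpow : ‖P‖ ^ (p - 2) * ‖P‖ ^ 2 = ‖P‖ ^ p := by
    rw [← Real.rpow_natCast, ← Real.rpow_add hP0]
    norm_num
  have bernoulli : 1 + p * (‖X‖ / ‖P‖ - 1) ≤ (‖X‖ / ‖P‖) ^ p := by
    simpa using one_add_mul_self_le_rpow_one_add (s := ‖X‖ / ‖P‖ - 1) (p := p)
      (by linarith [div_nonneg (norm_nonneg X) hP0.le]) (by linarith)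
  calc ‖P‖ ^ p + p * ‖P‖ ^ (p - 2) * ⟪P, X - P⟫
      ≤ ‖P‖ ^ p + p * ‖P‖ ^ (p - 2) * (‖P‖ ^ 2 * (‖X‖ / ‖P‖ - 1)) := by gcongr
    _ = ‖P‖ ^ p * (1 + p * (‖X‖ / ‖P‖ - 1)) := by rw [← hpow]; ring
    _ ≤ ‖P‖ ^ p * (‖X‖ / ‖P‖) ^ p := by gcongr
    _ = ‖X‖ ^ p := by
      rw [← Real.mul_rpow hP0.le (by positivity), mul_div_cancel₀ _ hP0.ne']

lemma rpow_sub_one_eq_mul {a p : ℝ} (ha : 0 ≤ a) (hp : p ≠ 1) :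
    a ^ (p - 1) = a ^ (p - 2) * a := by
  rw [← Real.rpow_add_one' ha (by contrapose! hp; linarith)]
  ring_nf

lemma norm_rpow_sub_norm_rpow_le {p : ℝ} (hp : 1 < p) (P X : E) :
    ‖P‖ ^ p - ‖X‖ ^ p ≤ p * ‖P‖ ^ (p - 1) * ‖P - X‖ := by
  have hconv := norm_rpow_add_inner_le hp.le P X
  have hcs : -(‖P‖ * ‖P - X‖) ≤ ⟪P, X - P⟫ := by
    rw [norm_sub_rev]
    exact neg_le_of_abs_le (abs_real_inner_le_norm _ _)
  have := mul_le_mul_of_nonneg_left hcs (by positivity : 0 ≤ p * ‖P‖ ^ (p - 2))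
  rw [rpow_sub_one_eq_mul (norm_nonneg P) (by linarith)]
  linarith

lemma inner_le_of_norm_mul_rpow_le {Z : E} {a ζ ζ₁ β : ℝ} (ha : 0 ≤ a) (hζ : 0 < ζ) (hζ₁ : 0 < ζ₁)
    (hZ : ‖Z‖ * ζ ^ β ≤ a * ζ₁ ^ β) (W : E) :
    ⟪Z, W⟫ ≤ a / 2 * (ζ₁ ^ (2 * β) * ζ ^ (-(2 * β)) + ‖W‖ ^ 2) := by
  set t := ζ₁ ^ β * ζ ^ (-β) with ht
  have ht_sq : t ^ 2 = ζ₁ ^ (2 * β) * ζ ^ (-(2 * β)) := by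
    rw [ht, mul_pow, ← Real.rpow_mul_natCast hζ₁.le, ← Real.rpow_mul_natCast hζ.le]
    ring_nf
  have hZt : ‖Z‖ ≤ a * t := by
    rwa [ht, Real.rpow_neg hζ.le, ← div_eq_mul_inv, ← mul_div_assoc, le_div_iff₀ (by positivity)]
  calc ⟪Z, W⟫ ≤ ‖Z‖ * ‖W‖ := real_inner_le_norm _ _
    _ ≤ a * t * ‖W‖ := by gcongr
    _ ≤ a / 2 * (t ^ 2 + ‖W‖ ^ 2) := by nlinarith [mul_nonneg ha (sq_nonneg (t - ‖W‖))]
    _ = _ := by rw [ht_sq]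

lemma mul_rpow_neg_rpow_sub_one {p β c t : ℝ} (hβ : β * (p - 1) = 1) (hc : 0 ≤ c) (ht : 0 ≤ t) :
    (c * t ^ (-β)) ^ (p - 1) = c ^ (p - 1) * t⁻¹ := by
  rw [Real.mul_rpow hc (Real.rpow_nonneg ht _), ← Real.rpow_mul ht, neg_mul, hβ, Real.rpow_neg_one]

lemma nonpos_of_forall_not_isLocalMax {X : Type*} [TopologicalSpace X] {T : Set X} {f : X → ℝ}
    (hT : IsCompact T) (hf : ContinuousOn f T)
    (hmax : ∀ x ∈ T, 0 < f x → T ∈ 𝓝 x ∧ ¬IsLocalMax f x) : ∀ x ∈ T, f x ≤ 0 := by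
  intro x hx
  obtain ⟨x₁, hx₁, hle⟩ := hT.exists_isMaxOn ⟨x, hx⟩ hf
  by_contra! hpos
  obtain ⟨hnhds, hnot⟩ := hmax x₁ hx₁ (hpos.trans_le (hle hx))
  exact hnot (hle.isLocalMax hnhds)

lemma eventually_continuousOn_diffQuotient {S T : Set E} {f : E → ℝ} {W : E → E} (hS : IsOpen S)
    (hf : ContinuousOn f S) (hW : Continuous W) (hTS : T ⊆ S) (hT : IsCompact T) :
    ∀ᶠ h : ℝ in 𝓝[>] 0, ContinuousOn (fun x => (f (x + h • W x) - f x) / h) T := by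
  have hmem : ∀ᶠ h : ℝ in 𝓝 0, ∀ x ∈ T, x + h • W x ∈ S := by
    refine hT.eventually_forall_of_forall_eventually fun x hx => ?_
    have hcont : Continuous fun z : ℝ × E => z.2 + z.1 • W z.2 := by fun_prop
    exact hcont.continuousAt.eventually (by simpa using hS.mem_nhds (hTS hx))
  filter_upwards [nhdsWithin_le_nhds hmem] with h hh
  exact ((hf.comp (by fun_prop) hh).sub (hf.mono hTS)).div_const h

lemma reflection_orthogonal_singleton_apply {e : E} (he : ‖e‖ = 1) (z : E) :
    (ℝ ∙ e)ᗮ.reflection z = z - (2 * ⟪e, z⟫) • e := by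
  rw [Submodule.reflection_orthogonal_apply, Submodule.reflection_singleton_apply, he]
  simp only [RCLike.ofReal_one, one_pow, div_one]
  module

lemma norm_le_of_inner_le {ν ξ : E} {b c : ℝ} (hν : ‖ν‖ = 1) (hb : 0 ≤ b) (hbc : b ≤ c)
    (hnormal : ⟪ξ, ν⟫ ≤ c) (hneg : ∀ e : E, ‖e‖ = 1 → 0 ≤ ⟪ν, e⟫ → -⟪ξ, e⟫ ≤ b) :
    ‖ξ‖ ≤ b + c := by
  have hνν : ⟪ν, ν⟫ = 1 := by rw [real_inner_self_eq_norm_sq, hν, one_pow]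
  set w := ξ - ⟪ξ, ν⟫ • ν with hw
  have hνw : ⟪ν, w⟫ = 0 := by
    rw [hw, inner_sub_right, inner_smul_right, hνν, real_inner_comm]
    ring
  have hξw : ⟪ξ, w⟫ = ‖w‖ ^ 2 := by
    rw [← real_inner_self_eq_norm_sq, ← sub_eq_zero, ← inner_sub_left, hw, sub_sub_cancel,
      ← hw, inner_smul_left, hνw, mul_zero]
  have hw_le : ‖w‖ ≤ b := by
    rcases eq_or_ne w 0 with h | h
    · rwa [h, norm_zero]
    · have hw₀ : ‖w‖ ≠ 0 := norm_ne_zero_iff.mpr h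
      simpa [inner_smul_right, hξw, pow_two, hw₀] using hneg (-(‖w‖⁻¹ • w))
        (by rw [norm_neg, norm_smul, norm_inv, norm_norm, inv_mul_cancel₀ hw₀])
        (by rw [inner_neg_right, inner_smul_right, hνw, mul_zero, neg_zero])
  have habs : |⟪ξ, ν⟫| ≤ c :=
    abs_le.mpr ⟨by linarith [hneg ν hν (hνν ▸ zero_le_one)], hnormal⟩
  calc ‖ξ‖ = ‖w + ⟪ξ, ν⟫ • ν‖ := by rw [hw, sub_add_cancel]
    _ ≤ ‖w‖ + |⟪ξ, ν⟫| := by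
        simpa [norm_smul, hν] using norm_add_le w (⟪ξ, ν⟫ • ν)
    _ ≤ b + c := add_le_add hw_le habs

/-- The half ball of radius `A` centred at the origin, on the side of the unit normal `ν`. -/
def halfBall (ν : E) (A : ℝ) : Set E := {x | 0 < ⟪ν, x⟫ ∧ ‖x‖ < A}

lemma isOpen_halfBall (ν : E) (A : ℝ) : IsOpen (halfBall ν A) :=
  .and (isOpen_lt continuous_const (by fun_prop)) (isOpen_lt continuous_norm continuous_const)

lemma halfBall_subset_halfBall {ν : E} {A A' : ℝ} (h : A ≤ A') : halfBall ν A ⊆ halfBall ν A' :=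
  fun _ hx => ⟨hx.1, hx.2.trans_le h⟩

/-- The part of the closed ball of radius `A` centred at the origin which lies between the heights
`c` and `L` over the hyperplane orthogonal to `ν`. -/
def truncatedSlab (ν : E) (A c L : ℝ) : Set E := closedBall 0 A ∩ (fun x => ⟪ν, x⟫) ⁻¹' Icc c L

lemma truncatedSlab_subset_halfBall {ν : E} {A A' c L : ℝ} (hc : 0 < c) (hA : A < A') :
    truncatedSlab ν A c L ⊆ halfBall ν A' := fun _ hx =>
  ⟨hc.trans_le hx.2.1, (mem_closedBall_zero_iff.mp hx.1).trans_lt hA⟩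

lemma truncatedSlab_mem_nhds {ν x : E} {A c L : ℝ} (hx : x ∈ truncatedSlab ν A c L) (hA : ‖x‖ ≠ A)
    (hc : ⟪ν, x⟫ ≠ c) (hL : ⟪ν, x⟫ ≠ L) : truncatedSlab ν A c L ∈ 𝓝 x := by
  have hxA := (mem_closedBall_zero_iff.mp hx.1).lt_of_ne hA
  have hcont : ContinuousAt (fun x => ⟪ν, x⟫) x := by fun_prop
  exact inter_mem (closedBall_mem_nhds_of_mem (mem_ball_zero_iff.mpr hxA))
    (hcont (Icc_mem_nhds (hx.2.1.lt_of_ne' hc) (hx.2.2.lt_of_ne hL)))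

lemma truncatedSlab_mono {ν : E} {A A' c c' L L' : ℝ} (hA : A ≤ A') (hc : c' ≤ c) (hL : L ≤ L') :
    truncatedSlab ν A c L ⊆ truncatedSlab ν A' c' L' :=
  inter_subset_inter (closedBall_subset_closedBall hA) (preimage_mono (Icc_subset_Icc hc hL))

lemma closedBall_subset_truncatedSlab {ν : E} (hν : ‖ν‖ = 1) (r : ℝ) :
    closedBall ν r ⊆ truncatedSlab ν (1 + r) (1 - r) (1 + r) := by
  intro x hx
  have hxν : ‖x - ν‖ ≤ r := mem_closedBall_iff_norm.mp hx
  have hinner : ⟪ν, x⟫ = 1 + ⟪ν, x - ν⟫ := by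
    rw [inner_sub_right, real_inner_self_eq_norm_sq, hν]
    ring
  have hcs : |⟪ν, x - ν⟫| ≤ r := (abs_real_inner_le_norm ν (x - ν)).trans (by rwa [hν, one_mul])
  refine ⟨mem_closedBall_zero_iff.mpr ?_, ?_⟩
  · linarith [norm_le_norm_add_norm_sub' x ν]
  · constructor <;> linarith [abs_le.mp hcs]

lemma add_smul_mem_halfBall {ν x e : E} {A A' c L τ : ℝ}
    (hx : x ∈ truncatedSlab ν A' c L) (hc : 0 < c) (hA : A' + 1 < A)
    (he : ‖e‖ = 1) (hνe : 0 ≤ ⟪ν, e⟫) (hτ : τ ∈ Icc (0 : ℝ) 1) :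
    x + τ • e ∈ halfBall ν A ∧ ⟪ν, x⟫ ≤ ⟪ν, x + τ • e⟫ := by
  have hinner : ⟪ν, x⟫ ≤ ⟪ν, x + τ • e⟫ := by
    rw [inner_add_right, inner_smul_right]
    linarith [mul_nonneg hτ.1 hνe]
  refine ⟨⟨hc.trans_le (hx.2.1.trans hinner), (norm_add_le _ _).trans_lt ?_⟩, hinner⟩
  rw [norm_smul, he, Real.norm_of_nonneg hτ.1]
  linarith [mem_closedBall_zero_iff.mp hx.1, hτ.2]

section BoundaryDistance

lemma le_infDist_frontier {X : Type*} [PseudoMetricSpace X] {Ω : Set X} {x : X} {r : ℝ}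
    (hΩ : IsOpen Ω) (hne : (frontier Ω).Nonempty) (h : ball x r ⊆ Ω) :
    r ≤ infDist x (frontier Ω) :=
  (le_infDist hne).mpr fun _ hw => not_lt.mp fun hlt =>
    (hΩ.frontier_eq ▸ hw).2 (h (mem_ball'.mpr hlt))

lemma infDist_frontier_pos {X : Type*} [PseudoMetricSpace X] {Ω : Set X} {x : X}
    (hΩ : IsOpen Ω) (hne : (frontier Ω).Nonempty) (hx : x ∈ Ω) : 0 < infDist x (frontier Ω) :=
  (isClosed_frontier.notMem_iff_infDist_pos hne).mp fun h => (hΩ.frontier_eq ▸ h).2 hx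

variable {F : Type*} [SeminormedAddCommGroup F] [NormedSpace ℝ F] {Ω : Set F} {x w : F}

lemma ball_infDist_frontier_subset (hΩ : IsOpen Ω) (hx : x ∈ Ω) :
    ball x (infDist x (frontier Ω)) ⊆ Ω := by
  intro y hy
  have hpos : 0 < infDist x (frontier Ω) := dist_nonneg.trans_lt (mem_ball.mp hy)
  refine (convex_ball x _).isPreconnected.subset_of_closure_inter_subset hΩ
    ⟨x, mem_ball_self hpos, hx⟩ (fun w ⟨hw, hwx⟩ => ?_) hy
  by_contra hwΩ
  have hwf : w ∈ frontier Ω := hΩ.frontier_eq ▸ ⟨hw, hwΩ⟩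
  exact (mem_ball'.mp hwx).not_ge (infDist_le_dist_of_mem hwf)

lemma infDist_frontier_le_dist (hΩ : IsOpen Ω) (hx : x ∈ Ω) (hw : w ∉ Ω) :
    infDist x (frontier Ω) ≤ dist x w :=
  not_lt.mp fun h => hw (ball_infDist_frontier_subset hΩ hx (mem_ball'.mpr h))

end BoundaryDistance

section TwoSidedBall

lemma mem_ball_add_smul_iff {y z ν : E} {R : ℝ} (hν : ‖ν‖ = 1) (hR : 0 < R) :
    y ∈ ball (z + R • ν) R ↔ ‖y - z‖ ^ 2 < 2 * R * ⟪y - z, ν⟫ := by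
  rw [mem_ball_iff_norm, ← sub_sub, ← sq_lt_sq₀ (norm_nonneg _) hR.le, norm_sub_sq_real,
    norm_smul, hν, inner_smul_right, Real.norm_of_nonneg hR.le]
  constructor <;> intro h <;> linarith

/-- The two-sided ball condition for `Ω` at the boundary point `z`, with inner unit normal `ν` and
radius `R`: of the two balls of radius `R` which touch each other at `z` in the direction `ν`, the
one on the side of `ν` lies in `Ω` and the other one does not meet `Ω`. -/
structure TwoSidedBallAt (Ω : Set E) (R : ℝ) (z ν : E) : Prop where
  norm_eq_one : ‖ν‖ = 1
  ball_subset : ball (z + R • ν) R ⊆ Ω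
  disjoint_ball : Disjoint (ball (z - R • ν) R) Ω

variable {Ω : Set E} {R : ℝ} {x z ν : E}

lemma TwoSidedBallAt.mono {R' : ℝ} (h : TwoSidedBallAt Ω R z ν) (hR : R' ≤ R) :
    TwoSidedBallAt Ω R' z ν where
  norm_eq_one := h.norm_eq_one
  ball_subset := by
    refine (ball_subset_ball' ?_).trans h.ball_subset
    rw [dist_add_left, dist_eq_norm, ← sub_smul, norm_smul, h.norm_eq_one, Real.norm_eq_abs,
      abs_of_nonpos (by linarith)]
    linarith
  disjoint_ball := by
    refine h.disjoint_ball.mono_left (ball_subset_ball' ?_)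
    rw [dist_sub_left, dist_eq_norm, ← sub_smul, norm_smul, h.norm_eq_one, Real.norm_eq_abs,
      abs_of_nonpos (by linarith)]
    linarith

lemma TwoSidedBallAt.eq_add_smul_of_ball_subset (h : TwoSidedBallAt Ω R z ν) (hR : 0 < R)
    (hx : x ≠ z) (hball : ball x ‖x - z‖ ⊆ Ω) : x = z + ‖x - z‖ • ν := by
  have hdist : ‖x - z‖ + R ≤ ‖x - z + R • ν‖ := by
    have := (disjoint_ball_ball_iff (norm_pos_iff.mpr (sub_ne_zero.mpr hx)) hR).mp
      (h.disjoint_ball.symm.mono_left hball)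
    rwa [dist_eq_norm, ← sub_add] at this
  have hRν : ‖R • ν‖ = R := by rw [norm_smul, h.norm_eq_one, Real.norm_of_nonneg hR.le, mul_one]
  have hray : SameRay ℝ (x - z) (R • ν) :=
    sameRay_iff_norm_add.mpr (((norm_add_le _ _).trans_eq (by rw [hRν])).antisymm (by rwa [hRν]))
  have hsmul : R • (‖x - z‖ • ν) = R • (x - z) := by
    simpa only [hRν, smul_comm R] using hray.norm_smul_eq
  rw [smul_right_injective E hR.ne' hsmul, add_sub_cancel]

lemma TwoSidedBallAt.ball_add_subset {w : E} {s : ℝ} (h : TwoSidedBallAt Ω R z ν) (hs : s ≤ R)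
    (hR : 0 ≤ R) (hw : ‖w‖ ^ 2 ≤ 2 * R * (⟪w, ν⟫ - s)) : ball (z + w) s ⊆ Ω := by
  refine (ball_subset_ball' ?_).trans h.ball_subset
  have hsq : ‖w - R • ν‖ ^ 2 ≤ (R - s) ^ 2 := by
    rw [norm_sub_sq_real, norm_smul, h.norm_eq_one, inner_smul_right, Real.norm_of_nonneg hR]
    linarith [sq_nonneg s]
  rw [dist_add_left, dist_eq_norm]
  linarith [le_of_sq_le_sq hsq (by linarith)]

lemma TwoSidedBallAt.infDist_frontier_add_le {w : E} {t : ℝ} (h : TwoSidedBallAt Ω R z ν)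
    (hΩ : IsOpen Ω) (hR : 0 < R) (hmem : z + w ∈ Ω) (ht : 0 ≤ t) (ht' : t ≤ 2 * ⟪w, ν⟫)
    (hw : ‖w‖ ^ 2 < 2 * R * (t - ⟪w, ν⟫)) : infDist (z + w) (frontier Ω) ≤ t := by
  have hout : z + w - t • ν ∈ ball (z - R • ν) R := by
    rw [sub_eq_add_neg z, ← smul_neg,
      mem_ball_add_smul_iff (by rw [norm_neg, h.norm_eq_one]) hR, add_sub_assoc,
      add_sub_cancel_left, norm_sub_sq_real, inner_neg_right, inner_sub_left, inner_smul_left,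
      inner_smul_right, real_inner_self_eq_norm_sq, norm_smul, h.norm_eq_one,
      Real.norm_of_nonneg ht]
    simp only [RCLike.conj_to_real]
    linarith [mul_nonneg ht (sub_nonneg.mpr ht')]
  calc infDist (z + w) (frontier Ω) ≤ dist (z + w) (z + w - t • ν) :=
        infDist_frontier_le_dist hΩ hmem (h.disjoint_ball.notMem_of_mem_left hout)
    _ = t := by
        rw [dist_eq_norm, sub_sub_cancel, norm_smul, h.norm_eq_one, mul_one, Real.norm_of_nonneg ht]

lemma TwoSidedBallAt.le_norm_sub (h : TwoSidedBallAt Ω R z ν) (hx : x ∈ closure Ω) :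
    R ≤ ‖x - (z - R • ν)‖ := by
  rw [← not_lt, ← mem_ball_iff_norm]
  exact disjoint_right.mp (h.disjoint_ball.closure_right isOpen_ball) hx

section HalfBall

variable {A η l : ℝ}

lemma norm_smul_add_smul_le (hν : ‖ν‖ = 1) (hη : 0 ≤ η) (hη₁ : η ≤ 1) (hl : 0 ≤ l)
    (hx : x ∈ halfBall ν A) : ‖l • (x + η • ν)‖ ≤ l * (A + 1) := by
  rw [norm_smul, Real.norm_of_nonneg hl]
  gcongr
  refine (norm_add_le _ _).trans (add_le_add hx.2.le ?_)
  rwa [norm_smul, hν, mul_one, Real.norm_of_nonneg hη]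

lemma norm_smul_add_smul_sq_le (hν : ‖ν‖ = 1) (hη : 0 ≤ η) (hη₁ : η ≤ 1) (hl : 0 ≤ l)
    (hlA : l * (A + 1) ^ 2 ≤ R * η) (hx : x ∈ halfBall ν A) :
    ‖l • (x + η • ν)‖ ^ 2 ≤ l * (R * η) := by
  calc ‖l • (x + η • ν)‖ ^ 2 ≤ (l * (A + 1)) ^ 2 := by
        gcongr
        exact norm_smul_add_smul_le hν hη hη₁ hl hx
    _ = l * (l * (A + 1) ^ 2) := by ring
    _ ≤ l * (R * η) := by gcongr

lemma inner_smul_add_smul_left (hν : ‖ν‖ = 1) (l η : ℝ) (x : E) :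
    ⟪l • (x + η • ν), ν⟫ = l * (⟪ν, x⟫ + η) := by
  rw [real_inner_comm, inner_smul_right, inner_add_right, inner_smul_right,
    real_inner_self_eq_norm_sq, hν, one_pow, mul_one]

namespace TwoSidedBallAt

lemma ball_halfBall_subset (h : TwoSidedBallAt Ω R z ν) (hR : 0 < R) (hη : 0 < η) (hη₁ : η ≤ 1)
    (hA : 1 ≤ A) (hl : 0 < l) (hlA : l * (A + 1) ^ 2 ≤ R * η) (hx : x ∈ halfBall ν A) :
    ball (z + l • (x + η • ν)) (l * ⟪ν, x⟫) ⊆ Ω := by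
  have hsA : ⟪ν, x⟫ ≤ A := (real_inner_le_norm ν x).trans (by
    rw [h.norm_eq_one, one_mul]
    exact hx.2.le)
  refine h.ball_add_subset ?_ hR.le ?_
  · calc l * ⟪ν, x⟫ ≤ l * (A + 1) ^ 2 := by
          gcongr
          nlinarith
      _ ≤ R * η := hlA
      _ ≤ R := mul_le_of_le_one_right hR.le hη₁
  · rw [inner_smul_add_smul_left h.norm_eq_one]
    linarith [norm_smul_add_smul_sq_le h.norm_eq_one hη.le hη₁ hl.le hlA hx,
      show 0 < l * (R * η) by positivity]

lemma infDist_halfBall_mem_Icc (h : TwoSidedBallAt Ω R z ν) (hΩ : IsOpen Ω)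
    (hne : (frontier Ω).Nonempty) (hR : 0 < R) (hη : 0 < η) (hη₁ : η ≤ 1) (hA : 1 ≤ A)
    (hl : 0 < l) (hlA : l * (A + 1) ^ 2 ≤ R * η) (hx : x ∈ halfBall ν A) :
    infDist (z + l • (x + η • ν)) (frontier Ω) ∈ Icc (l * ⟪ν, x⟫) (l * (⟪ν, x⟫ + 2 * η)) := by
  have hball := h.ball_halfBall_subset hR hη hη₁ hA hl hlA hx
  have hs : 0 < ⟪ν, x⟫ := hx.1
  have hinner := inner_smul_add_smul_left h.norm_eq_one l η x
  refine ⟨le_infDist_frontier hΩ hne hball, h.infDist_frontier_add_le hΩ hR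
    (hball (mem_ball_self (by positivity))) (by positivity) ?_ ?_⟩
  · rw [hinner]
    linarith [mul_pos hl hs]
  · rw [hinner]
    linarith [norm_smul_add_smul_sq_le h.norm_eq_one hη.le hη₁ hl.le hlA hx,
      show 0 < l * (R * η) by positivity]

end TwoSidedBallAt

end HalfBall

end TwoSidedBall

section Regularity

lemma exists_norm_sub_sub_fderiv_le {F G : Type*} [NormedAddCommGroup F] [NormedSpace ℝ F]
    [NormedAddCommGroup G] [NormedSpace ℝ G] {f : F → G} {x₀ : F} (hf : ContDiffAt ℝ 2 f x₀) :
    ∃ K r : ℝ, 0 ≤ K ∧ 0 < r ∧ ∀ z ∈ ball x₀ r, ∀ x ∈ ball x₀ r,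
      ‖f x - f z - fderiv ℝ f z (x - z)‖ ≤ K * ‖x - z‖ ^ 2 := by
  obtain ⟨K, t, ht, hK⟩ := (hf.fderiv_right (m := 1) (by norm_num)).exists_lipschitzOnWith
  have hdiff : ∀ᶠ y in 𝓝 x₀, DifferentiableAt ℝ f y :=
    (hf.eventually (by decide)).mono fun y hy => hy.differentiableAt (by norm_num)
  obtain ⟨r, hr, hball⟩ := Metric.eventually_nhds_iff_ball.mp (hdiff.and ht)
  refine ⟨K, r, K.2, hr, fun z hz x hx => ?_⟩
  have hconv : Convex ℝ (ball x₀ r ∩ closedBall z ‖x - z‖) :=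
    (convex_ball x₀ r).inter (convex_closedBall z _)
  have hbound : ∀ y ∈ ball x₀ r ∩ closedBall z ‖x - z‖,
      ‖fderiv ℝ f y - fderiv ℝ f z‖ ≤ K * ‖x - z‖ := fun y hy => by
    rw [← dist_eq_norm]
    exact (hK.dist_le_mul y (hball y hy.1).2 z (hball z hz).2).trans
      (mul_le_mul_of_nonneg_left hy.2 K.2)
  calc ‖f x - f z - fderiv ℝ f z (x - z)‖ ≤ K * ‖x - z‖ * ‖x - z‖ :=
        hconv.norm_image_sub_le_of_norm_hasFDerivWithin_le'
          (fun y hy => (hball y hy.1).1.hasFDerivAt.hasFDerivWithinAt) hbound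
          ⟨hz, mem_closedBall_self (norm_nonneg _)⟩ ⟨hx, (dist_eq_norm x z).le⟩
    _ = K * ‖x - z‖ ^ 2 := by ring

lemma twoSidedBallAt_of_abs_sub_inner_le {Ω : Set E} {f : E → ℝ} {z g : E} {K ρ R : ℝ}
    (hΩ : ∀ x ∈ ball z ρ, x ∈ Ω ↔ f x < 0)
    (hf : ∀ x ∈ ball z ρ, |f x - ⟪g, x - z⟫| ≤ K * ‖x - z‖ ^ 2) (hK : 0 ≤ K) (hR : 0 < R)
    (hRK : 2 * R * K < ‖g‖) (hRρ : 2 * R ≤ ρ) : TwoSidedBallAt Ω R z (-(‖g‖⁻¹ • g)) := by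
  have hg : 0 < ‖g‖ := lt_of_le_of_lt (by positivity) hRK
  set ν := -(‖g‖⁻¹ • g) with hν
  have hν₁ : ‖ν‖ = 1 := by rw [hν, norm_neg, norm_smul, norm_inv, norm_norm, inv_mul_cancel₀ hg.ne']
  have hinner : ∀ y, ⟪g, y⟫ = -(‖g‖ * ⟪y, ν⟫) := fun y => by
    rw [hν, inner_neg_right, inner_smul_right, real_inner_comm]
    field_simp
  have hloc : ∀ e : E, ‖e‖ = 1 → ball (z + R • e) R ⊆ ball z ρ := fun e he =>
    ball_subset_ball' (by
      rw [dist_self_add_left, norm_smul, he, Real.norm_of_nonneg hR.le]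
      linarith)
  have hquad : ∀ {a b : ℝ}, 0 ≤ b → b < 2 * R * a → K * b < ‖g‖ * a := fun {a b} hb hab => by
    have ha : 0 < a := pos_of_mul_pos_right (hb.trans_lt hab) (by positivity)
    calc K * b ≤ K * (2 * R * a) := by gcongr
      _ = 2 * R * K * a := by ring
      _ < ‖g‖ * a := by gcongr
  refine ⟨hν₁, fun x hx => ?_, disjoint_left.mpr fun x hx hxΩ => ?_⟩
  · have hxρ := hloc ν hν₁ hx
    have hlt := hquad (sq_nonneg _) ((mem_ball_add_smul_iff hν₁ hR).mp hx)
    have := hinner (x - z) ▸ (abs_le.mp (hf x hxρ)).2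
    exact (hΩ x hxρ).mpr (by linarith)
  · rw [sub_eq_add_neg, ← smul_neg] at hx
    have hν₁' : ‖-ν‖ = 1 := by rwa [norm_neg]
    have hxρ := hloc (-ν) hν₁' hx
    have hlt := hquad (sq_nonneg _) ((mem_ball_add_smul_iff hν₁' hR).mp hx)
    rw [inner_neg_right] at hlt
    have := hinner (x - z) ▸ (abs_le.mp (hf x hxρ)).1
    linarith [(hΩ x hxρ).mp hxΩ]

lemma exists_eventually_twoSidedBallAt [CompleteSpace E] {Ω : Set E} {f : E → ℝ} {z₀ : E}
    (hf : ContDiffAt ℝ 2 f z₀) (hf_ne : fderiv ℝ f z₀ ≠ 0)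
    (hΩ : ∀ᶠ x in 𝓝 z₀, x ∈ Ω ↔ f x < 0) :
    ∃ R > 0, ∀ᶠ z in 𝓝 z₀, f z = 0 → ∃ ν, TwoSidedBallAt Ω R z ν := by
  obtain ⟨m, hm, hm_lt⟩ := exists_between (norm_pos_iff.mpr hf_ne)
  have hm_ev : ∀ᶠ z in 𝓝 z₀, m < ‖fderiv ℝ f z‖ :=
    (hf.fderiv_right (m := 0) (by norm_num)).continuousAt.norm.eventually_const_lt hm_lt
  obtain ⟨K, r₁, hK, hr₁, hTaylor⟩ := exists_norm_sub_sub_fderiv_le hf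
  obtain ⟨r₂, hr₂, hball⟩ := Metric.eventually_nhds_iff_ball.mp hΩ
  set ρ := min r₁ r₂ / 2 with hρ
  have hρ₀ : 0 < ρ := half_pos (lt_min hr₁ hr₂)
  have hR_ev : ∀ᶠ R in 𝓝 (0 : ℝ), 2 * R * K < m ∧ 2 * R < ρ :=
    .and ((by fun_prop : Continuous fun R : ℝ => 2 * R * K).tendsto' 0 0 (by simp)
      |>.eventually_lt_const hm)
      ((by fun_prop : Continuous fun R : ℝ => 2 * R).tendsto' 0 0 (by simp)
      |>.eventually_lt_const hρ₀)
  obtain ⟨R, ⟨hRK, hRρ⟩, hR⟩ :=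
    ((hR_ev.filter_mono nhdsWithin_le_nhds).and (self_mem_nhdsWithin (s := Ioi 0))).exists
  refine ⟨R, hR, ?_⟩
  filter_upwards [hm_ev, ball_mem_nhds z₀ hρ₀] with z hz hzρ hfz
  have hsub : ball z ρ ⊆ ball z₀ (min r₁ r₂) :=
    ball_subset_ball' (by linarith [mem_ball.mp hzρ])
  have hnorm : ‖∇ f z‖ = ‖fderiv ℝ f z‖ := LinearIsometryEquiv.norm_map _ _
  refine ⟨_, twoSidedBallAt_of_abs_sub_inner_le (g := ∇ f z) (K := K) (ρ := ρ)
    (fun x hx => hball x (ball_subset_ball (min_le_right _ _) (hsub hx))) (fun x hx => ?_) hK hR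
    (hnorm ▸ hRK.trans hz) hRρ.le⟩
  have := hTaylor z (ball_subset_ball (min_le_left _ _) (hsub (mem_ball_self hρ₀))) x
    (ball_subset_ball (min_le_left _ _) (hsub hx))
  rwa [hfz, sub_zero, Real.norm_eq_abs, ← InnerProductSpace.toDual_symm_apply] at this

theorem IsC2Boundary.exists_forall_twoSidedBallAt {n : ℕ} {Ω : Set (EuclideanSpace ℝ (Fin n))}
    (hΩ : IsC2Boundary Ω) (hb : Bornology.IsBounded Ω) :
    ∃ R > 0, ∀ z ∈ frontier Ω, ∃ ν, TwoSidedBallAt Ω R z ν := by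
  have hc : IsCompact (frontier Ω) :=
    isCompact_of_isClosed_isBounded isClosed_frontier (hb.closure.subset frontier_subset_closure)
  refine hc.induction_on ⟨1, one_pos, fun z hz => absurd hz (notMem_empty z)⟩
    (fun s t hst ⟨R, hR, h⟩ => ⟨R, hR, fun z hz => h z (hst hz)⟩)
    (fun s t ⟨R, hR, h⟩ ⟨R', hR', h'⟩ => ⟨min R R', lt_min hR hR', ?_⟩) fun z₀ hz₀ => ?_
  · rintro z (hz | hz)
    · exact (h z hz).imp fun ν hν => hν.mono (min_le_left _ _)
    · exact (h' z hz).imp fun ν hν => hν.mono (min_le_right _ _)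
  · obtain ⟨f, U, hU, hf, hf_ne, hfΩ, hf_frontier⟩ := hΩ z₀ hz₀
    obtain ⟨R, hR, h⟩ := exists_eventually_twoSidedBallAt (hf.contDiffAt hU)
      (hf_ne z₀ (mem_of_mem_nhds hU))
      (mem_of_superset hU fun x hx => by simpa [hx] using Set.ext_iff.mp hfΩ x)
    exact ⟨_, inter_mem self_mem_nhdsWithin (mem_nhdsWithin_of_mem_nhds (inter_mem h hU)), R, hR,
      fun z ⟨hz, hz', hzU⟩ => hz' (by simpa [hz, hzU] using Set.ext_iff.mp hf_frontier z)⟩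

end Regularity

variable [FiniteDimensional ℝ E]

section SecondOrderCalculus

/-- The second-order data of `f` at `x` entering the maximum principle: `f` is of class `C²` near
`x`, with gradient `G` and Laplacian `L` at `x`. -/
structure HasGradLaplacianAt (f : E → ℝ) (G : E) (L : ℝ) (x : E) : Prop where
  contDiffAt : ContDiffAt ℝ 2 f x
  gradient_eq : ∇ f x = G
  laplacian_eq : Δ f x = L

variable {f f₁ f₂ : E → ℝ} {G G₁ G₂ x : E} {L L₁ L₂ : ℝ}

lemma HasGradLaplacianAt.hasGradientAt (hf : HasGradLaplacianAt f G L x) : HasGradientAt f G x :=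
  hf.gradient_eq ▸ (hf.contDiffAt.differentiableAt two_ne_zero).hasGradientAt

lemma HasGradLaplacianAt.congr_data (hf : HasGradLaplacianAt f G₁ L₁ x) (hG : G₁ = G₂)
    (hL : L₁ = L₂) : HasGradLaplacianAt f G₂ L₂ x :=
  hG ▸ hL ▸ hf

lemma eventually_hasGradientAt_of_contDiffAt (hf : ContDiffAt ℝ 2 f x) :
    ∀ᶠ y in 𝓝 x, HasGradientAt f (∇ f y) y :=
  (hf.eventually (by simp)).mono fun _ hy => (hy.differentiableAt two_ne_zero).hasGradientAt

lemma contDiffAt_gradient (hf : ContDiffAt ℝ 2 f x) : ContDiffAt ℝ 1 (∇ f) x :=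
  (InnerProductSpace.toDual ℝ E).symm.contDiff.contDiffAt.comp x
    (hf.fderiv_right (m := 1) (by norm_num))

lemma continuousAt_laplacian (hf : ContDiffAt ℝ 2 f x) : ContinuousAt (Δ f) x := by
  rw [InnerProductSpace.laplacian_eq_iteratedFDeriv_stdOrthonormalBasis]
  refine tendsto_finsetSum _ fun i _ => ?_
  have hcont : ContinuousAt (iteratedFDeriv ℝ 2 f) x :=
    (hf.iteratedFDeriv_right (m := 0) (i := 2) (by norm_num)).continuousAt
  exact ((ContinuousMultilinearMap.apply ℝ (fun _ : Fin 2 => E) ℝ _).continuous.tendsto _).comp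
    hcont

lemma laplacian_eq_sum_inner {G : E → E} {H : E →L[ℝ] E} {ι : Type*} [Fintype ι]
    (b : OrthonormalBasis ι ℝ E) (hf : ∀ᶠ y in 𝓝 x, HasGradientAt f (G y) y)
    (hG : HasFDerivAt G H x) : Δ f x = ∑ i, ⟪H (b i), b i⟫ := by
  have hfd : fderiv ℝ f =ᶠ[𝓝 x] fun y => innerSL ℝ (G y) :=
    hf.mono fun y hy => hy.hasFDerivAt.fderiv
  have hfd' : HasFDerivAt (fderiv ℝ f) ((innerSL ℝ : E →L[ℝ] _).comp H) x :=
    ((innerSL ℝ : E →L[ℝ] _).hasFDerivAt.comp x hG).congr_of_eventuallyEq hfd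
  simp only [InnerProductSpace.laplacian_eq_iteratedFDeriv_orthonormalBasis f b,
    iteratedFDeriv_two_apply, hfd'.fderiv, ContinuousLinearMap.comp_apply, innerSL_apply_apply,
    Matrix.cons_val_zero, Matrix.cons_val_one]

lemma lap_eq_laplacian {n : ℕ} {u : EuclideanSpace ℝ (Fin n) → ℝ} {x : EuclideanSpace ℝ (Fin n)}
    (hu : ContDiffAt ℝ 2 u x) : lap u x = Δ u x := by
  have hfd : DifferentiableAt ℝ (fderiv ℝ u) x :=
    (hu.fderiv_right (m := 1) (by norm_num)).differentiableAt one_ne_zero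
  simp [lap, InnerProductSpace.laplacian_eq_iteratedFDeriv_orthonormalBasis u
    (EuclideanSpace.basisFun (Fin n) ℝ), iteratedFDeriv_two_apply,
    fderiv_clm_apply hfd (differentiableAt_const _)]

lemma nonpos_of_isLocalMax {ψ ψ₁ : ℝ → ℝ} {a c : ℝ} (hmax : IsLocalMax ψ a)
    (h₁ : ∀ᶠ t in 𝓝 a, HasDerivAt ψ (ψ₁ t) t) (h₂ : HasDerivAt ψ₁ c a) : c ≤ 0 := by
  by_contra! hc
  have hd : deriv ψ =ᶠ[𝓝 a] ψ₁ := h₁.mono fun t ht => ht.deriv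
  have hdd : deriv (deriv ψ) a = c := hd.deriv_eq.trans h₂.deriv
  have hmin : IsLocalMin ψ a :=
    isLocalMin_of_deriv_deriv_pos (hdd ▸ hc) hmax.deriv_eq_zero
      h₁.self_of_nhds.continuousAt
  have hconst : ψ =ᶠ[𝓝 a] fun _ => ψ a := by
    filter_upwards [hmax, hmin] with t hle hge using le_antisymm hle hge
  have hzero : deriv (deriv ψ) a = 0 := by simp [hconst.deriv.deriv_eq]
  exact hc.ne' (hdd ▸ hzero)

namespace HasGradLaplacianAt

lemma of_hasFDerivAt {G : E → E} {H : E →L[ℝ] E} (hf : ContDiffAt ℝ 2 f x)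
    (hG : ∀ᶠ y in 𝓝 x, HasGradientAt f (G y) y) (hH : HasFDerivAt G H x) :
    HasGradLaplacianAt f (G x)
      (∑ i, ⟪H (stdOrthonormalBasis ℝ E i), stdOrthonormalBasis ℝ E i⟫) x :=
  ⟨hf, hG.self_of_nhds.gradient, laplacian_eq_sum_inner _ hG hH⟩

lemma laplacian_eq_sum_fderiv_gradient (hf : HasGradLaplacianAt f G L x) {ι : Type*} [Fintype ι]
    (b : OrthonormalBasis ι ℝ E) : L = ∑ i, ⟪fderiv ℝ (∇ f) x (b i), b i⟫ :=
  hf.laplacian_eq.symm.trans <| laplacian_eq_sum_inner b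
    (eventually_hasGradientAt_of_contDiffAt hf.contDiffAt)
    ((contDiffAt_gradient hf.contDiffAt).differentiableAt one_ne_zero).hasFDerivAt

lemma hasFDerivAt_gradient (hf : HasGradLaplacianAt f G L x) :
    HasFDerivAt (∇ f) (fderiv ℝ (∇ f) x) x :=
  ((contDiffAt_gradient hf.contDiffAt).differentiableAt one_ne_zero).hasFDerivAt

lemma const (c : ℝ) : HasGradLaplacianAt (fun _ : E => c) 0 0 x :=
  ⟨contDiffAt_const, (hasGradientAt_const x c).gradient, by simp⟩

lemma add (h₁ : HasGradLaplacianAt f₁ G₁ L₁ x) (h₂ : HasGradLaplacianAt f₂ G₂ L₂ x) :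
    HasGradLaplacianAt (fun y => f₁ y + f₂ y) (G₁ + G₂) (L₁ + L₂) x where
  contDiffAt := h₁.contDiffAt.add h₂.contDiffAt
  gradient_eq := HasGradientAt.gradient <| by
    simpa only [HasGradientAt, HasGradientAtFilter, map_add] using!
      h₁.hasGradientAt.hasFDerivAt.add h₂.hasGradientAt.hasFDerivAt
  laplacian_eq := by
    simpa only [h₁.laplacian_eq, h₂.laplacian_eq] using!
      h₁.contDiffAt.laplacian_add h₂.contDiffAt

lemma const_mul (c : ℝ) (hf : HasGradLaplacianAt f G L x) :
    HasGradLaplacianAt (fun y => c * f y) (c • G) (c * L) x where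
  contDiffAt := contDiffAt_const.mul hf.contDiffAt
  gradient_eq := HasGradientAt.gradient <| by
    simpa only [hasGradientAt_iff_hasFDerivAt, map_smul] using!
      hf.hasGradientAt.hasFDerivAt.const_mul c
  laplacian_eq := by
    simpa only [hf.laplacian_eq] using! InnerProductSpace.laplacian_smul c hf.contDiffAt

lemma sub (h₁ : HasGradLaplacianAt f₁ G₁ L₁ x) (h₂ : HasGradLaplacianAt f₂ G₂ L₂ x) :
    HasGradLaplacianAt (fun y => f₁ y - f₂ y) (G₁ - G₂) (L₁ - L₂) x := by
  simpa only [neg_one_mul, ← sub_eq_add_neg, neg_one_smul] using h₁.add (h₂.const_mul (-1))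

lemma inner_left (ν : E) : HasGradLaplacianAt (fun y => ⟪ν, y⟫) ν 0 x := by
  refine (of_hasFDerivAt (G := fun _ => ν) (innerSL ℝ ν).contDiff.contDiffAt
    (.of_forall fun _ => ?_) (hasFDerivAt_const ν x)).congr_data rfl (by simp)
  exact (innerSL ℝ ν).hasFDerivAt

lemma norm_sub_sq (c : E) : HasGradLaplacianAt (fun y => ‖y - c‖ ^ 2) ((2 : ℝ) • (x - c))
    (2 * Module.finrank ℝ E) x := by
  have hH : HasFDerivAt (fun y : E => (2 : ℝ) • (y - c)) ((2 : ℝ) • .id ℝ E) x :=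
    ((hasFDerivAt_id x).sub_const c).const_smul (2 : ℝ)
  refine (of_hasFDerivAt (G := fun y => (2 : ℝ) • (y - c))
    ((contDiffAt_id.sub contDiffAt_const).norm_sq ℝ) (.of_forall fun y => ?_) hH).congr_data rfl
    (by simp [inner_smul_left, mul_comm])
  rw [hasGradientAt_iff_hasFDerivAt]
  exact ((hasFDerivAt_id y).sub_const c).norm_sq.congr_fderiv (by ext; simp)

lemma comp_affine {R : E ≃ₗᵢ[ℝ] E} {c : E} {a : ℝ}
    (hf : HasGradLaplacianAt f G L (c + a • R x)) :
    HasGradLaplacianAt (fun y => f (c + a • R y)) (a • R.symm G) (a ^ 2 * L) x := by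
  let A : E →L[ℝ] E := a • (R : E →L[ℝ] E)
  have hA : ∀ y, HasFDerivAt (fun y => c + a • R y) A y := fun y =>
    (((R : E →L[ℝ] E).hasFDerivAt).const_smul a).const_add c
  have hG : ∀ᶠ y in 𝓝 x, HasGradientAt (fun y => f (c + a • R y))
      (a • R.symm (∇ f (c + a • R y))) y := by
    filter_upwards [(hA x).continuousAt.eventually
      (eventually_hasGradientAt_of_contDiffAt hf.contDiffAt)] with y hy
    rw [hasGradientAt_iff_hasFDerivAt]
    exact (hy.hasFDerivAt.comp y (hA y)).congr_fderiv <| by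
      ext
      simp [A, LinearIsometryEquiv.inner_map_eq_flip]
  have hH : HasFDerivAt (fun y => a • R.symm (∇ f (c + a • R y)))
      (a • (R.symm : E →L[ℝ] E).comp ((fderiv ℝ (∇ f) (c + a • R x)).comp A)) x := by
    have hcomp : HasFDerivAt (fun y => ∇ f (c + a • R y))
        ((fderiv ℝ (∇ f) (c + a • R x)).comp A) x :=
      HasFDerivAt.comp x (g := ∇ f) hf.hasFDerivAt_gradient (hA x)
    exact (((R.symm : E →L[ℝ] E).hasFDerivAt).comp x hcomp).const_smul a
  have hc : ContDiffAt ℝ 2 (fun y => f (c + a • R y)) x :=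
    hf.contDiffAt.comp x (contDiffAt_const.add (R.contDiff.contDiffAt.const_smul a))
  refine (of_hasFDerivAt hc hG hH).congr_data (by rw [hf.gradient_eq]) ?_
  rw [hf.laplacian_eq_sum_fderiv_gradient ((stdOrthonormalBasis ℝ E).map R), Finset.mul_sum]
  refine Finset.sum_congr rfl fun i _ => ?_
  simp [A, inner_smul_left, LinearIsometryEquiv.inner_map_eq_flip]
  ring

lemma comp_add_smul {c : E} {a : ℝ} (hf : HasGradLaplacianAt f G L (c + a • x)) :
    HasGradLaplacianAt (fun y => f (c + a • y)) (a • G) (a ^ 2 * L) x :=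
  comp_affine (R := LinearIsometryEquiv.refl ℝ E) hf

lemma scalar_comp {F F₁ : ℝ → ℝ} {F₂ : ℝ} (hf : HasGradLaplacianAt f G L x)
    (hF : ContDiffAt ℝ 2 F (f x)) (hF₁ : ∀ᶠ t in 𝓝 (f x), HasDerivAt F (F₁ t) t)
    (hF₂ : HasDerivAt F₁ F₂ (f x)) :
    HasGradLaplacianAt (fun y => F (f y)) (F₁ (f x) • G) (F₁ (f x) * L + F₂ * ‖G‖ ^ 2) x := by
  have hG : ∀ᶠ y in 𝓝 x, HasGradientAt (fun y => F (f y)) (F₁ (f y) • ∇ f y) y := by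
    filter_upwards [hf.contDiffAt.continuousAt.eventually hF₁,
      eventually_hasGradientAt_of_contDiffAt hf.contDiffAt] with y hFy hfy
    simpa only [hasGradientAt_iff_hasFDerivAt, map_smul] using!
      hFy.comp_hasFDerivAt y hfy.hasFDerivAt
  have hH := (hF₂.comp_hasFDerivAt x hf.hasGradientAt.hasFDerivAt).smul hf.hasFDerivAt_gradient
  refine (of_hasFDerivAt (hF.comp x hf.contDiffAt) hG hH).congr_data (by rw [hf.gradient_eq]) ?_
  rw [hf.laplacian_eq_sum_fderiv_gradient (stdOrthonormalBasis ℝ E),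
    ← (stdOrthonormalBasis ℝ E).sum_sq_inner_left G, Finset.mul_sum, Finset.mul_sum,
    ← Finset.sum_add_distrib]
  refine Finset.sum_congr rfl fun i _ => ?_
  simp [inner_add_left, inner_smul_left, hf.gradient_eq]
  ring

lemma rpow_const {s : ℝ} (hf : HasGradLaplacianAt f G L x) (hpos : 0 < f x) :
    HasGradLaplacianAt (fun y => f y ^ s) ((s * f x ^ (s - 1)) • G)
      (s * f x ^ (s - 1) * L + s * (s - 1) * f x ^ (s - 2) * ‖G‖ ^ 2) x := by
  refine (hf.scalar_comp (F := fun t => t ^ s) (F₁ := fun t => s * t ^ (s - 1))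
    (Real.contDiffAt_rpow_const_of_ne hpos.ne') ?_
    ((Real.hasDerivAt_rpow_const (Or.inl hpos.ne')).const_mul s)).congr_data rfl (by ring_nf)
  filter_upwards [lt_mem_nhds hpos] with t ht using Real.hasDerivAt_rpow_const (Or.inl ht.ne')

lemma exp (hf : HasGradLaplacianAt f G L x) :
    HasGradLaplacianAt (fun y => Real.exp (f y)) (Real.exp (f x) • G)
      (Real.exp (f x) * L + Real.exp (f x) * ‖G‖ ^ 2) x :=
  hf.scalar_comp Real.contDiff_exp.contDiffAt (.of_forall Real.hasDerivAt_exp)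
    (Real.hasDerivAt_exp _)

lemma eq_zero_and_nonpos_of_isLocalMax (hf : HasGradLaplacianAt f G L x) (hmax : IsLocalMax f x) :
    G = 0 ∧ L ≤ 0 := by
  have hG : G = 0 := by
    rw [← hf.gradient_eq, gradient, hmax.fderiv_eq_zero, map_zero]
  refine ⟨hG, ?_⟩
  rw [hf.laplacian_eq_sum_fderiv_gradient (stdOrthonormalBasis ℝ E)]
  refine Finset.sum_nonpos fun i _ => ?_
  set ξ := stdOrthonormalBasis ℝ E i
  have hline : ∀ t : ℝ, HasDerivAt (fun t : ℝ => x + t • ξ) ξ t := fun t => by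
    simpa using ((hasDerivAt_id t).smul_const ξ).const_add x
  have htend : Tendsto (fun t : ℝ => x + t • ξ) (𝓝 0) (𝓝 x) := by
    simpa using (hline 0).continuousAt.tendsto
  have h₁ : ∀ᶠ t in 𝓝 (0 : ℝ), HasDerivAt (fun t => f (x + t • ξ)) ⟪∇ f (x + t • ξ), ξ⟫ t :=
    (htend.eventually (eventually_hasGradientAt_of_contDiffAt hf.contDiffAt)).mono fun t ht =>
      HasFDerivAt.comp_hasDerivAt (f := fun t : ℝ => x + t • ξ) t ht.hasFDerivAt (hline t)
  have h₂ : HasDerivAt (fun t : ℝ => ⟪∇ f (x + t • ξ), ξ⟫) ⟪fderiv ℝ (∇ f) x ξ, ξ⟫ 0 := by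
    have hgrad : HasFDerivAt (∇ f) (fderiv ℝ (∇ f) x) (x + (0 : ℝ) • ξ) := by
      simpa using hf.hasFDerivAt_gradient
    simpa using (hgrad.comp_hasDerivAt (0 : ℝ) (hline 0)).inner ℝ (hasDerivAt_const (0 : ℝ) ξ)
  have hmax' : IsLocalMax (fun t : ℝ => f (x + t • ξ)) 0 := by
    simpa [IsLocalMax, IsMaxFilter] using htend.eventually hmax
  exact nonpos_of_isLocalMax hmax' h₁ h₂

end HasGradLaplacianAt

end SecondOrderCalculus

section LinearizedPrinciple

/-- `v` is a classical solution on the open set `S` of the viscous Hamilton–Jacobi equation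
`-Δ v = ‖∇ v‖ ^ p + g`, whose source `g` is on `S` bounded by `K` and `K`-Lipschitz. -/
structure IsSolutionOn (p K : ℝ) (S : Set E) (v g : E → ℝ) : Prop where
  isOpen : IsOpen S
  contDiffOn : ContDiffOn ℝ 2 v S
  equation : ∀ x ∈ S, -Δ v x = ‖∇ v x‖ ^ p + g x
  abs_le : ∀ x ∈ S, |g x| ≤ K
  abs_sub_le : ∀ x ∈ S, ∀ y ∈ S, |g x - g y| ≤ K * ‖x - y‖

variable {p K : ℝ} {S T : Set E} {v g : E → ℝ}

lemma IsSolutionOn.hasGradLaplacianAt (hs : IsSolutionOn p K S v g) {x : E} (hx : x ∈ S) :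
    HasGradLaplacianAt v (∇ v x) (-(‖∇ v x‖ ^ p + g x)) x :=
  ⟨hs.contDiffOn.contDiffAt (hs.isOpen.mem_nhds hx), rfl, by rw [← hs.equation x hx, neg_neg]⟩

lemma IsSolutionOn.continuousOn (hs : IsSolutionOn p K S v g) : ContinuousOn v S :=
  hs.contDiffOn.continuousOn

lemma IsSolutionOn.continuousOn_gradient (hs : IsSolutionOn p K S v g) : ContinuousOn (∇ v) S :=
  fun _ hx => (hs.hasGradLaplacianAt hx).hasFDerivAt_gradient.continuousAt.continuousWithinAt

lemma tendsto_diffQuotient {f : E → ℝ} {W : E → E} {x₁ : E} (hf : ContDiffAt ℝ 2 f x₁)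
    (hW : ContinuousAt W x₁) :
    Tendsto (fun z : ℝ × E => (f (z.2 + z.1 • W z.2) - f z.2) / z.1) (𝓝[>] 0 ×ˢ 𝓝 x₁)
      (𝓝 ⟪∇ f x₁, W x₁⟫) := by
  have hstrict : HasStrictFDerivAt f (innerSL ℝ (∇ f x₁)) x₁ :=
    (hf.differentiableAt two_ne_zero).hasGradientAt.hasFDerivAt.fderiv ▸
      hf.hasStrictFDerivAt two_ne_zero
  have hh : Tendsto (fun z : ℝ × E => z.1) (𝓝[>] 0 ×ˢ 𝓝 x₁) (𝓝 0) :=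
    tendsto_fst.mono_right nhdsWithin_le_nhds
  have hWt : Tendsto (fun z : ℝ × E => W z.2) (𝓝[>] 0 ×ˢ 𝓝 x₁) (𝓝 (W x₁)) :=
    hW.tendsto.comp tendsto_snd
  have hshift : Tendsto (fun z : ℝ × E => z.2 + z.1 • W z.2) (𝓝[>] 0 ×ˢ 𝓝 x₁) (𝓝 x₁) := by
    simpa using tendsto_snd.add (hh.smul hWt)
  have hpair := hshift.prodMk_nhds tendsto_snd
  have hbigO := (Asymptotics.isBigO_refl (fun z : ℝ × E => z.1) (𝓝[>] 0 ×ˢ 𝓝 x₁)).smul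
    (hWt.isBigO_one ℝ)
  have hlittle := (hstrict.isLittleO.comp_tendsto hpair).trans_isBigO
    (k := fun z : ℝ × E => z.1) (by simpa [Function.comp_def] using hbigO)
  have hpos : ∀ᶠ z : ℝ × E in 𝓝[>] 0 ×ˢ 𝓝 x₁, 0 < z.1 :=
    tendsto_fst.eventually self_mem_nhdsWithin
  have hzero := hlittle.tendsto_div_nhds_zero.add
    (((innerSL ℝ (∇ f x₁)).continuous.tendsto _).comp hWt)
  rw [zero_add] at hzero
  refine hzero.congr' (hpos.mono fun z hz => ?_)
  simp [sub_div, hz.ne']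

lemma tendstoUniformlyOn_diffQuotient {f : E → ℝ} {W : E → E} (hS : IsOpen S)
    (hf : ContDiffOn ℝ 2 f S) (hW : Continuous W) (hTS : T ⊆ S) (hT : IsCompact T) :
    TendstoUniformlyOn (fun h x => (f (x + h • W x) - f x) / h) (fun x => ⟪∇ f x, W x⟫)
      (𝓝[>] (0 : ℝ)) T := by
  refine (tendstoLocallyUniformlyOn_iff_forall_isCompact hS).mp ?_ T hTS hT
  rw [Metric.tendstoLocallyUniformlyOn_iff]
  intro ε hε x hx
  have hfx : ContDiffAt ℝ 2 f x := hf.contDiffAt (hS.mem_nhds hx)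
  have hlim : ∀ᶠ y in 𝓝 x, dist ⟪∇ f y, W y⟫ ⟪∇ f x, W x⟫ < ε / 2 :=
    ((contDiffAt_gradient hfx).continuousAt.inner hW.continuousAt).eventually
      (ball_mem_nhds _ (half_pos hε))
  obtain ⟨P, hP, P', hP', hPP'⟩ := eventually_prod_iff.mp <|
    (tendsto_diffQuotient hfx hW.continuousAt).eventually (ball_mem_nhds _ (half_pos hε))
  refine ⟨_, mem_nhdsWithin_of_mem_nhds (hP'.and hlim), hP.mono fun h hh y hy => ?_⟩
  calc _ ≤ _ := dist_triangle_right _ _ ⟪∇ f x, W x⟫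
    _ < ε / 2 + ε / 2 := add_lt_add hy.2 (hPP' hh hy.1)
    _ = ε := add_halves ε

lemma eventually_exists_isLocalMax {ι : Type*} {l : Filter ι} {F : ι → E → ℝ} {ψ : E → ℝ} {x₁ : E}
    {ρ σ : ℝ} (hρ : 0 < ρ) (hσ : 0 < σ) (hF : TendstoUniformlyOn F ψ l (closedBall x₁ ρ))
    (hcont : ∀ᶠ i in l, ContinuousOn (F i) (closedBall x₁ ρ))
    (hψ : ∀ x ∈ closedBall x₁ ρ, ψ x + σ * ‖x - x₁‖ ^ 2 ≤ ψ x₁) :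
    ∀ᶠ i in l, ∃ x ∈ ball x₁ ρ, IsLocalMax (F i) x := by
  filter_upwards [Metric.tendstoUniformlyOn_iff.mp hF (σ * ρ ^ 2 / 2) (by positivity), hcont]
    with i hclose hi
  obtain ⟨x, hx, hmin⟩ := Metric.exists_isLocalMin_mem_ball (f := fun x => -F i x) (z := x₁)
    hi.neg (mem_closedBall_self hρ.le) (fun x hx => by
      have hxb : x ∈ closedBall x₁ ρ := sphere_subset_closedBall hx
      have h₀ := abs_lt.mp (hclose x₁ (mem_closedBall_self hρ.le))
      have hx' := abs_lt.mp (hclose x hxb)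
      have hψx := hψ x hxb
      rw [mem_sphere_iff_norm.mp hx] at hψx
      linarith [h₀.2, hx'.1])
  exact ⟨x, hx, by simpa using hmin.neg⟩

lemma IsSolutionOn.diffQuotient_test (hp : 1 < p) (hs : IsSolutionOn p K S v g) {φ : E → ℝ}
    {x x₁ e Q : E} {h k l : ℝ} (hh : 0 < h) (hk : -1 ≤ h * k) (hx : x ∈ S)
    (hy : x + h • (e + k • (x - x₁)) ∈ S) (hφ : HasGradLaplacianAt φ Q l x)
    (hmax : IsLocalMax (fun x => (v (x + h • (e + k • (x - x₁))) - v x) / h - φ x) x) :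
    ((p - 2) * k - h * k ^ 2) * ‖∇ v (x + h • (e + k • (x - x₁)))‖ ^ p
      - p * ‖(1 + h * k) • ∇ v (x + h • (e + k • (x - x₁)))‖ ^ (p - 2)
        * ⟪(1 + h * k) • ∇ v (x + h • (e + k • (x - x₁))), Q⟫
      - K * ‖e + k • (x - x₁)‖ - |2 * k + h * k ^ 2| * K ≤ l := by
  set y := x + h • (e + k • (x - x₁)) with hy_def
  have haffine : ∀ z, h • (e - k • x₁) + (1 + h * k) • z = z + h • (e + k • (z - x₁)) :=
    fun z => by module
  have hshift := HasGradLaplacianAt.comp_add_smul (x := x)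
    ((haffine x).trans hy_def.symm ▸ hs.hasGradLaplacianAt hy)
  have hD := ((hshift.sub (hs.hasGradLaplacianAt hx)).const_mul h⁻¹).sub hφ
  obtain ⟨hgrad, hlap⟩ := hD.eq_zero_and_nonpos_of_isLocalMax <| by
    simpa only [haffine, inv_mul_eq_div] using hmax
  rw [haffine x, ← hy_def] at hgrad hlap
  set Y := ∇ v y
  have hX : ∇ v x - (1 + h * k) • Y = -(h • Q) := by
    rw [sub_eq_zero, inv_smul_eq_iff₀ hh.ne'] at hgrad
    rw [← hgrad, neg_sub]
  have hconv := norm_rpow_add_inner_le hp.le ((1 + h * k) • Y) (∇ v x)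
  rw [hX, inner_neg_right, inner_smul_right] at hconv
  have hbernoulli : (1 + p * (h * k)) * ‖Y‖ ^ p ≤ ‖(1 + h * k) • Y‖ ^ p := by
    rw [norm_smul, Real.norm_of_nonneg (by linarith), Real.mul_rpow (by linarith) (norm_nonneg _)]
    gcongr
    exact one_add_mul_self_le_rpow_one_add hk (by linarith)
  have hsource : (2 * k + h * k ^ 2) * g y ≤ |2 * k + h * k ^ 2| * K := by
    refine (le_abs_self _).trans ?_
    rw [abs_mul]
    exact mul_le_mul_of_nonneg_left (hs.abs_le y hy) (abs_nonneg _)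
  have hlip : -(K * (h * ‖e + k • (x - x₁)‖)) ≤ g x - g y := by
    have := hs.abs_sub_le x hx y hy
    rw [hy_def, sub_add_cancel_left, norm_neg, norm_smul, Real.norm_of_nonneg hh.le] at this
    exact neg_le_of_abs_le this
  rw [sub_nonpos, inv_mul_le_iff₀ hh] at hlap
  refine le_of_mul_le_mul_left ?_ hh
  have := mul_le_mul_of_nonneg_left hsource hh.le
  nlinarith

lemma frequently_isLocalMax_diffQuotient {φ : E → ℝ} {W : E → E} {x₁ : E} {σ : ℝ}
    (hS : IsOpen S) (hv : ContDiffOn ℝ 2 v S) (hx₁ : x₁ ∈ S) (hW : Continuous W)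
    (hφ : ∀ᶠ x in 𝓝 x₁, ContinuousAt φ x) (hσ : 0 < σ)
    (hle : ∀ᶠ x in 𝓝 x₁, ⟪∇ v x, W x⟫ ≤ φ x) (heq : ⟪∇ v x₁, W x₁⟫ = φ x₁) :
    ∃ᶠ z : ℝ × E in 𝓝[>] 0 ×ˢ 𝓝 x₁, IsLocalMax
      (fun x => (v (x + z.1 • W x) - v x) / z.1 - (φ x + σ * ‖x - x₁‖ ^ 2)) z.2 := by
  intro hnot
  obtain ⟨P, hP, P', hP', hPP'⟩ := eventually_prod_iff.mp hnot
  obtain ⟨r, hr, hball⟩ := Metric.eventually_nhds_iff_ball.mp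
    (((hS.eventually_mem hx₁).and hφ).and (hle.and hP'))
  set B := closedBall x₁ (r / 2)
  have hB : ∀ x ∈ B, x ∈ ball x₁ r := closedBall_subset_ball (half_lt_self hr)
  have hBS : B ⊆ S := fun x hx => (hball x (hB x hx)).1.1
  have hφB : ContinuousOn (fun x => φ x + σ * ‖x - x₁‖ ^ 2) B := fun x hx =>
    ((hball x (hB x hx)).1.2.add (by fun_prop)).continuousWithinAt
  have hunif := tendstoUniformlyOn_diffQuotient hS hv hW hBS (isCompact_closedBall x₁ (r / 2))
  have hsub : TendstoUniformlyOn
      (fun h x => (v (x + h • W x) - v x) / h - (φ x + σ * ‖x - x₁‖ ^ 2))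
      (fun x => ⟪∇ v x, W x⟫ - (φ x + σ * ‖x - x₁‖ ^ 2)) (𝓝[>] (0 : ℝ)) B := by
    simpa only [Metric.tendstoUniformlyOn_iff, dist_sub_right] using hunif
  have hcont := (eventually_continuousOn_diffQuotient hS hv.continuousOn hW hBS
    (isCompact_closedBall x₁ (r / 2))).mono fun _ h => h.sub hφB
  have hψ : ∀ x ∈ B, ⟪∇ v x, W x⟫ - (φ x + σ * ‖x - x₁‖ ^ 2) + σ * ‖x - x₁‖ ^ 2
      ≤ ⟪∇ v x₁, W x₁⟫ - (φ x₁ + σ * ‖x₁ - x₁‖ ^ 2) := fun x hx => by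
    have := (hball x (hB x hx)).2.1
    simp only [heq, sub_self, norm_zero]
    linarith
  obtain ⟨h, ⟨x, hx, hmax⟩, hPh⟩ :=
    ((eventually_exists_isLocalMax (half_pos hr) hσ hsub hcont hψ).and hP).exists
  exact hPP' hPh (hball x (hB x (ball_subset_closedBall hx))).2.2 hmax

lemma IsSolutionOn.linearized_principle_add_sq (hp : 2 < p) (hs : IsSolutionOn p K S v g)
    {φ : E → ℝ} {x₁ e Q : E} {k l σ : ℝ} (hx₁ : x₁ ∈ S) (hφ : HasGradLaplacianAt φ Q l x₁)
    (hle : ∀ᶠ x in 𝓝 x₁, ⟪∇ v x, e + k • (x - x₁)⟫ ≤ φ x) (heq : ⟪∇ v x₁, e⟫ = φ x₁)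
    (hσ : 0 < σ) :
    (p - 2) * k * ‖∇ v x₁‖ ^ p - p * ‖∇ v x₁‖ ^ (p - 2) * ⟪∇ v x₁, Q⟫ - K * ‖e‖ - 2 * |k| * K
      ≤ l + σ * (2 * Module.finrank ℝ E) := by
  set y : ℝ × E → E := fun z => z.2 + z.1 • (e + k • (z.2 - x₁))
  have hprod : 𝓝[>] (0 : ℝ) ×ˢ 𝓝 x₁ ≤ 𝓝 (0, x₁) := by
    rw [nhds_prod_eq]
    exact prod_mono_left _ nhdsWithin_le_nhds
  have hy : Tendsto y (𝓝[>] 0 ×ˢ 𝓝 x₁) (𝓝 x₁) := by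
    have hcont : Continuous y := by fun_prop
    simpa [y] using (hcont.tendsto (0, x₁)).mono_left hprod
  let Λ : ℝ × E × E × E × ℝ → ℝ := fun (h, x, Y, P, d) =>
    ((p - 2) * k - h * k ^ 2) * ‖Y‖ ^ p
      - p * ‖(1 + h * k) • Y‖ ^ (p - 2) * ⟪(1 + h * k) • Y, P + σ • (2 : ℝ) • (x - x₁)⟫
      - K * ‖e + k • (x - x₁)‖ - |2 * k + h * k ^ 2| * K - d
  have hΛ : Continuous Λ := by
    have hp₀ : 0 ≤ p := by linarith
    have hp₂ : 0 ≤ p - 2 := by linarith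
    fun_prop (disch := simp [hp₀, hp₂])
  have hfreq : ∃ᶠ z in 𝓝[>] 0 ×ˢ 𝓝 x₁,
      Λ (z.1, z.2, ∇ v (y z), ∇ φ z.2, Δ φ z.2) ≤ σ * (2 * Module.finrank ℝ E) := by
    have hφc : ∀ᶠ x in 𝓝 x₁, ContDiffAt ℝ 2 φ x := hφ.contDiffAt.eventually (by simp)
    have hk : ∀ᶠ z : ℝ × E in 𝓝[>] 0 ×ˢ 𝓝 x₁, -1 < z.1 * k :=
      hprod ((by fun_prop : Continuous fun z : ℝ × E => z.1 * k).continuousAt.eventually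
        (lt_mem_nhds (by simp)))
    refine ((frequently_isLocalMax_diffQuotient hs.isOpen hs.contDiffOn hx₁ (by fun_prop)
      (hφc.mono fun _ h => h.continuousAt) hσ hle (by simpa using heq)).and_eventually <|
      (hy.eventually (hs.isOpen.eventually_mem hx₁)).and <| hk.and <| tendsto_fst.eventually
        eventually_mem_nhdsWithin |>.and <| tendsto_snd.eventually <|
      hφc.and (hs.isOpen.eventually_mem hx₁)).mono ?_
    rintro z ⟨hmax, hyz, hzk, hz, hφz, hzS⟩
    exact sub_le_iff_le_add'.mpr <| hs.diffQuotient_test (by linarith) hz hzk.le hzS hyz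
      (.add ⟨hφz, rfl, rfl⟩ ((HasGradLaplacianAt.norm_sub_sq x₁).const_mul σ)) hmax
  have hlim := (hΛ.tendsto _).comp <| (tendsto_fst.mono_right nhdsWithin_le_nhds).prodMk_nhds <|
    tendsto_snd.prodMk_nhds <|
      ((hs.hasGradLaplacianAt hx₁).hasFDerivAt_gradient.continuousAt.tendsto.comp hy).prodMk_nhds <|
      (hφ.hasFDerivAt_gradient.continuousAt.tendsto.comp tendsto_snd).prodMk_nhds <|
      (continuousAt_laplacian hφ.contDiffAt).tendsto.comp tendsto_snd
  have hΛle := le_of_tendsto_of_frequently hlim hfreq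
  simp only [Λ, sub_self, smul_zero, add_zero, zero_mul, sub_zero, one_smul, abs_mul, abs_two,
    hφ.gradient_eq, hφ.laplacian_eq] at hΛle
  linarith

lemma IsSolutionOn.linearized_principle (hp : 2 < p) (hs : IsSolutionOn p K S v g) {φ : E → ℝ}
    {x₁ e Q : E} {k l : ℝ} (hx₁ : x₁ ∈ S) (hφ : HasGradLaplacianAt φ Q l x₁)
    (hle : ∀ᶠ x in 𝓝 x₁, ⟪∇ v x, e + k • (x - x₁)⟫ ≤ φ x) (heq : ⟪∇ v x₁, e⟫ = φ x₁) :
    (p - 2) * k * ‖∇ v x₁‖ ^ p - p * ‖∇ v x₁‖ ^ (p - 2) * ⟪∇ v x₁, Q⟫ - K * ‖e‖ - 2 * |k| * K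
      ≤ l := by
  have hlim : Tendsto (fun σ : ℝ => l + σ * (2 * Module.finrank ℝ E)) (𝓝[>] 0) (𝓝 l) := by
    have hcont : Continuous fun σ : ℝ => l + σ * (2 * Module.finrank ℝ E) := by fun_prop
    simpa using (hcont.tendsto 0).mono_left nhdsWithin_le_nhds
  exact ge_of_tendsto hlim <| eventually_mem_nhdsWithin.mono fun σ hσ =>
    hs.linearized_principle_add_sq hp hx₁ hφ hle heq hσ

lemma IsSolutionOn.directional_principle (hp : 2 < p) (hs : IsSolutionOn p K S v g) {ψ : E → ℝ}
    {x₁ e Q : E} {l : ℝ} (hx₁ : x₁ ∈ S) (hψ : HasGradLaplacianAt ψ Q l x₁)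
    (hmax : IsLocalMax (fun x => ⟪∇ v x, e⟫ - ψ x) x₁) :
    -(p * ‖∇ v x₁‖ ^ (p - 2) * ⟪∇ v x₁, Q⟫) - K * ‖e‖ ≤ l := by
  have hφ := hψ.add (.const (⟪∇ v x₁, e⟫ - ψ x₁))
  rw [add_zero, add_zero] at hφ
  have hle : ∀ᶠ x in 𝓝 x₁, ⟪∇ v x, e + (0 : ℝ) • (x - x₁)⟫ ≤ ψ x + (⟪∇ v x₁, e⟫ - ψ x₁) := by
    filter_upwards [hmax] with x hx
    rw [zero_smul, add_zero]
    linarith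
  simpa using hs.linearized_principle hp hx₁ hφ hle (by ring)

end LinearizedPrinciple

section Bernstein

variable {p β M : ℝ} {S : Set E} {v g : E → ℝ}

lemma hasGradLaplacianAt_bernstein_test (β k a : ℝ) (e : E) {x₁ : E} (hx₁ : ‖x₁‖ < 1) :
    HasGradLaplacianAt
      (fun x => a / 2 * ((1 - ‖x₁‖ ^ 2) ^ (2 * β) * (1 - ‖x‖ ^ 2) ^ (-(2 * β))
        + ‖e + k • (x - x₁)‖ ^ 2))
      (a • ((2 * β / (1 - ‖x₁‖ ^ 2)) • x₁ + k • e))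
      (a * (2 * β * Module.finrank ℝ E / (1 - ‖x₁‖ ^ 2)
        + 4 * β * (2 * β + 1) * ‖x₁‖ ^ 2 / (1 - ‖x₁‖ ^ 2) ^ 2
        + Module.finrank ℝ E * k ^ 2)) x₁ := by
  set ζ₁ := 1 - ‖x₁‖ ^ 2
  have hζ : 0 < ζ₁ := by
    have := norm_nonneg x₁
    nlinarith
  have hζlap : HasGradLaplacianAt (fun x : E => 1 - ‖x‖ ^ 2) (-(2 : ℝ) • x₁)
      (-(2 * Module.finrank ℝ E)) x₁ := by
    simpa using (HasGradLaplacianAt.const (x := x₁) 1).sub (.norm_sub_sq 0)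
  have hsq : HasGradLaplacianAt (fun x => ‖e + k • (x - x₁)‖ ^ 2) (k • (2 : ℝ) • e)
      (k ^ 2 * (2 * Module.finrank ℝ E)) x₁ := by
    have haffine : ∀ x, e - k • x₁ + k • x = e + k • (x - x₁) := fun x => by module
    simpa [haffine] using
      HasGradLaplacianAt.comp_add_smul (x := x₁) (a := k)
        (.norm_sub_sq (x := e - k • x₁ + k • x₁) 0)
  have hpow : ∀ i : ℕ, ζ₁ ^ (2 * β) * ζ₁ ^ (-(2 * β) - i) = (ζ₁ ^ i)⁻¹ := fun i => by
    rw [← Real.rpow_add hζ, ← Real.rpow_natCast, ← Real.rpow_neg hζ.le]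
    ring_nf
  refine ((((hζlap.rpow_const hζ).const_mul _).add hsq).const_mul (a / 2)).congr_data ?_ ?_
  · have h₁ := hpow 1
    push_cast at h₁
    simp only [smul_add, smul_smul]
    congr 2
    · linear_combination a * (2 * β) * h₁
    · ring
  · have h₁ := hpow 1
    have h₂ := hpow 2
    push_cast at h₁ h₂
    rw [norm_smul]
    norm_num
    linear_combination a / 2 * (2 * β) * (2 * Module.finrank ℝ E) * h₁
     + a * (2 * β) * (2 * β + 1) * 2 * ‖x₁‖ ^ 2 * h₂

lemma IsSolutionOn.bernstein_inequality (hp : 2 < p) (hβ : 0 ≤ β) (hs : IsSolutionOn p M S v g)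
    {x₁ : E} (hx₁ : x₁ ∈ S) (hnorm : ‖x₁‖ < 1) (hG : ∇ v x₁ ≠ 0) {κ : ℝ} (hκ : 0 ≤ κ)
    (hmax : ∀ᶠ x in 𝓝 x₁, ‖∇ v x‖ * (1 - ‖x‖ ^ 2) ^ β ≤ ‖∇ v x₁‖ * (1 - ‖x₁‖ ^ 2) ^ β) :
    2 * κ * ‖∇ v x₁‖ ^ p ≤ 2 * p * β * ‖∇ v x₁‖ ^ p / (1 - ‖x₁‖ ^ 2) + M * (1 + 2 * κ)
      + ‖∇ v x₁‖ * (2 * β * Module.finrank ℝ E / (1 - ‖x₁‖ ^ 2)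
        + 4 * β * (2 * β + 1) / (1 - ‖x₁‖ ^ 2) ^ 2 + Module.finrank ℝ E * κ ^ 2) := by
  set G := ∇ v x₁
  have hG₀ : 0 < ‖G‖ := norm_pos_iff.mpr hG
  have hζ₁ : 0 < 1 - ‖x₁‖ ^ 2 := by nlinarith [norm_nonneg x₁]
  set ζ₁ := 1 - ‖x₁‖ ^ 2
  set e := ‖G‖⁻¹ • G
  have he : ‖e‖ = 1 := norm_smul_inv_norm hG
  have hGe : ⟪G, e⟫ = ‖G‖ := by
    rw [inner_smul_right, real_inner_self_eq_norm_sq]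
    field_simp
  have hle : ∀ᶠ x in 𝓝 x₁, ⟪∇ v x, e + (-κ) • (x - x₁)⟫ ≤ ‖G‖ / 2 *
      (ζ₁ ^ (2 * β) * (1 - ‖x‖ ^ 2) ^ (-(2 * β)) + ‖e + (-κ) • (x - x₁)‖ ^ 2) := by
    have hball : ∀ᶠ x : E in 𝓝 x₁, ‖x‖ < 1 := continuous_norm.continuousAt.eventually_lt_const hnorm
    filter_upwards [hmax, hball] with x hx hx1
    have hζ : 0 < 1 - ‖x‖ ^ 2 := by nlinarith [norm_nonneg x]
    exact inner_le_of_norm_mul_rpow_le hG₀.le hζ hζ₁ hx _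
  have heq : ⟪G, e⟫ = ‖G‖ / 2 *
      (ζ₁ ^ (2 * β) * (1 - ‖x₁‖ ^ 2) ^ (-(2 * β)) + ‖e + (-κ) • (x₁ - x₁)‖ ^ 2) := by
    rw [hGe, sub_self, smul_zero, add_zero, he, ← Real.rpow_add hζ₁]
    norm_num
  have hlin := hs.linearized_principle hp hx₁ (hasGradLaplacianAt_bernstein_test β (-κ) ‖G‖ e hnorm)
    hle heq
  have hpow : ‖G‖ ^ (p - 2) * ‖G‖ ^ 2 = ‖G‖ ^ p := by
    rw [← Real.rpow_natCast, ← Real.rpow_add hG₀]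
    norm_num
  have hinner : p * ‖G‖ ^ (p - 2) * ⟪G, ‖G‖ • ((2 * β / ζ₁) • x₁ + (-κ) • e)⟫
      ≤ 2 * p * β * ‖G‖ ^ p / ζ₁ - p * κ * ‖G‖ ^ p := by
    rw [inner_smul_right, inner_add_right, inner_smul_right, inner_smul_right, hGe]
    have hGx : ⟪G, x₁⟫ ≤ ‖G‖ * 1 := (real_inner_le_norm _ _).trans (by gcongr)
    calc _ ≤ p * ‖G‖ ^ (p - 2) * (‖G‖ * (2 * β / ζ₁ * (‖G‖ * 1) + -κ * ‖G‖)) := by gcongr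
      _ = _ := by rw [← hpow]; ring
  have hx₁sq : 4 * β * (2 * β + 1) * ‖x₁‖ ^ 2 / ζ₁ ^ 2 ≤ 4 * β * (2 * β + 1) / ζ₁ ^ 2 :=
    div_le_div_of_nonneg_right (mul_le_of_le_one_right (by positivity)
      (pow_le_one₀ (norm_nonneg _) hnorm.le)) (by positivity)
  rw [he, abs_neg, abs_of_nonneg hκ, neg_sq] at hlin
  nlinarith [mul_le_mul_of_nonneg_left hx₁sq hG₀.le]

lemma IsSolutionOn.bernstein_quadratic (hp : 2 < p) (hβ : 0 ≤ β) (hβ₁ : β ≤ 1)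
    (hs : IsSolutionOn p M S v g) {x₁ : E} (hx₁ : x₁ ∈ S) (hnorm : ‖x₁‖ < 1) (hG : 1 ≤ ‖∇ v x₁‖)
    (hmax : ∀ᶠ x in 𝓝 x₁, ‖∇ v x‖ * (1 - ‖x‖ ^ 2) ^ β ≤ ‖∇ v x₁‖ * (1 - ‖x₁‖ ^ 2) ^ β) {X : ℝ}
    (hX : X = ‖∇ v x₁‖ ^ (p - 1) * (1 - ‖x₁‖ ^ 2)) :
    X ^ 2 / (Module.finrank ℝ E + 1)
      ≤ 2 * p * β * X + M * (1 + 2 * X) + 2 * Module.finrank ℝ E + 12 := by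
  have hM : 0 ≤ M := (abs_nonneg _).trans (hs.abs_le _ hx₁)
  have hζ₀ : 0 < 1 - ‖x₁‖ ^ 2 := by nlinarith [norm_nonneg x₁]
  have hζ₁ : 1 - ‖x₁‖ ^ 2 ≤ 1 := by nlinarith [norm_nonneg x₁]
  have hr₀ : 0 < ‖∇ v x₁‖ := by linarith
  have hX₀ : 0 ≤ X := by rw [hX]; positivity
  -- This choice of `κ` makes `2 κ ‖∇ v x₁‖ ^ p` absorb the term in `κ ^ 2`.
  have hmain := hs.bernstein_inequality hp hβ hx₁ hnorm (norm_pos_iff.mp hr₀)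
    (κ := X / (Module.finrank ℝ E + 1) / (1 - ‖x₁‖ ^ 2)) (by positivity) hmax
  set r := ‖∇ v x₁‖
  set ζ := 1 - ‖x₁‖ ^ 2
  set N : ℝ := (Module.finrank ℝ E : ℝ)
  have hN : 0 ≤ N := Nat.cast_nonneg _
  have hrp : r ^ p = r * X / ζ := by
    rw [hX, Real.rpow_sub_one hr₀.ne']
    field_simp
  have hscaled : 2 * (X ^ 2 / (N + 1)) ≤ 2 * p * β * X + M * ((ζ ^ 2 + 2 * (X / (N + 1)) * ζ) / r)
      + 2 * β * N * ζ + 4 * β * (2 * β + 1) + N * (X / (N + 1)) ^ 2 := by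
    rw [hrp] at hmain
    refine le_of_mul_le_mul_right (a := r / ζ ^ 2) ?_ (by positivity)
    refine Eq.trans_le ?_ (hmain.trans_eq ?_)
    · field_simp
    · field_simp
      ring
  have hsource : (ζ ^ 2 + 2 * (X / (N + 1)) * ζ) / r ≤ 1 + 2 * X := by
    have hXN : X / (N + 1) ≤ X := div_le_self hX₀ (by linarith)
    calc (ζ ^ 2 + 2 * (X / (N + 1)) * ζ) / r ≤ ζ ^ 2 + 2 * (X / (N + 1)) * ζ :=
          div_le_self (by positivity) hG
      _ ≤ 1 ^ 2 + 2 * X * 1 := by gcongr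
      _ = 1 + 2 * X := by ring
  have hN_sq : N * (X / (N + 1)) ^ 2 ≤ X ^ 2 / (N + 1) := by
    rw [div_pow, mul_div_assoc', div_le_div_iff₀ (by positivity) (by positivity)]
    nlinarith [mul_nonneg (sq_nonneg X) (by linarith : 0 ≤ N + 1)]
  have hβN : β * N * ζ ≤ 1 * N * 1 := by gcongr
  nlinarith [mul_le_mul_of_nonneg_left hsource hM]

lemma IsSolutionOn.rpow_mul_le (hp : 2 < p) (hβ : 0 ≤ β) (hβ₁ : β ≤ 1) (hs : IsSolutionOn p M S v g)
    {x₁ : E} (hx₁ : x₁ ∈ S) (hnorm : ‖x₁‖ < 1) (hG : 1 ≤ ‖∇ v x₁‖)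
    (hmax : ∀ᶠ x in 𝓝 x₁, ‖∇ v x‖ * (1 - ‖x‖ ^ 2) ^ β ≤ ‖∇ v x₁‖ * (1 - ‖x₁‖ ^ 2) ^ β) :
    ‖∇ v x₁‖ ^ (p - 1) * (1 - ‖x₁‖ ^ 2)
      ≤ 1 + (2 * p * β + 2 * Module.finrank ℝ E + 12 + 3 * M) * (Module.finrank ℝ E + 1) := by
  have hM : 0 ≤ M := (abs_nonneg _).trans (hs.abs_le _ hx₁)
  obtain ⟨X, hX⟩ : ∃ X, X = ‖∇ v x₁‖ ^ (p - 1) * (1 - ‖x₁‖ ^ 2) := ⟨_, rfl⟩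
  have hquad := hs.bernstein_quadratic hp hβ hβ₁ hx₁ hnorm hG hmax hX
  rw [← hX]
  set N : ℝ := (Module.finrank ℝ E : ℝ)
  have hN : 0 ≤ N := Nat.cast_nonneg _
  rw [div_le_iff₀ (by positivity)] at hquad
  by_contra! hlt
  have hX₁ : 1 ≤ X := le_trans (le_add_of_nonneg_right (by positivity)) hlt.le
  have hlin : 2 * p * β * X + M * (1 + 2 * X) + 2 * N + 12 ≤
      (2 * p * β + 2 * N + 12 + 3 * M) * X := by nlinarith
  nlinarith [mul_le_mul_of_nonneg_right hlin (by linarith : 0 ≤ N + 1)]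

theorem exists_norm_gradient_zero_le (hp : 2 < p) (hβ : β * (p - 1) = 1) (hM : 0 ≤ M) :
    ∃ C > 0, ∀ (S : Set E) (v g : E → ℝ), IsSolutionOn p M S v g → closedBall 0 1 ⊆ S →
      ‖∇ v 0‖ ≤ C := by
  have hβ₀ : 0 < β := pos_of_mul_pos_left (hβ ▸ one_pos) (by linarith)
  have hβ₁ : β ≤ 1 := by nlinarith
  set B := 1 + (2 * p * β + 2 * Module.finrank ℝ E + 12 + 3 * M) * (Module.finrank ℝ E + 1)
  have hB : 1 ≤ B := le_add_of_nonneg_right (by positivity)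
  refine ⟨B ^ β, by positivity, fun S v g hs hS => ?_⟩
  set m : E → ℝ := fun x => ‖∇ v x‖ * (1 - ‖x‖ ^ 2) ^ β
  have hm : ContinuousOn m (closedBall 0 1) :=
    (hs.continuousOn_gradient.mono hS).norm.mul (by fun_prop (disch := simp [hβ₀.le]))
  obtain ⟨x₁, hx₁, hmax⟩ := (isCompact_closedBall (0 : E) 1).exists_isMaxOn
    (nonempty_closedBall.mpr zero_le_one) hm
  have hm₀ : ‖∇ v 0‖ ≤ m x₁ := by simpa [m] using hmax (mem_closedBall_self zero_le_one)
  rw [mem_closedBall_zero_iff] at hx₁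
  refine hm₀.trans ?_
  have hζ : 0 ≤ 1 - ‖x₁‖ ^ 2 := by nlinarith [norm_nonneg x₁]
  have hB₁ : 1 ≤ B ^ β := Real.one_le_rpow hB hβ₀.le
  rcases lt_or_ge ‖∇ v x₁‖ 1 with hsmall | hlarge
  · have : (1 - ‖x₁‖ ^ 2) ^ β ≤ 1 := Real.rpow_le_one hζ (by nlinarith [norm_nonneg x₁]) hβ₀.le
    exact (mul_le_one₀ hsmall.le (by positivity) this).trans hB₁
  rcases hx₁.eq_or_lt with hone | hlt
  · simpa [m, hone, hβ₀.ne'] using zero_le_one.trans hB₁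
  have hloc : ∀ᶠ x in 𝓝 x₁, m x ≤ m x₁ :=
    hmax.isLocalMax (closedBall_mem_nhds_of_mem (by simpa using hlt))
  calc m x₁ = (‖∇ v x₁‖ ^ (p - 1) * (1 - ‖x₁‖ ^ 2)) ^ β := by
        rw [Real.mul_rpow (by positivity) hζ, ← Real.rpow_mul (norm_nonneg _), mul_comm (p - 1), hβ,
          Real.rpow_one]
    _ ≤ B ^ β := by
        gcongr
        exact hs.rpow_mul_le hp hβ₀.le hβ₁ (hS (by simpa using hlt.le)) hlt hlarge hloc

end Bernstein

section HalfBallModel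

/-- A solution on a large half ball with an almost vanishing source, together with the a priori
bounds which a rescaling around a boundary point inherits from the crude gradient estimate. As
`A → ∞` and `η → 0` these degenerate to solutions of `-Δ v = ‖∇ v‖ ^ p` on a half space which
vanish on its boundary. -/
structure HalfBallModel (p β C₀ A η : ℝ) (ν : E) (v g : E → ℝ) : Prop where
  isSolutionOn : IsSolutionOn p η (halfBall ν A) v g
  norm_eq_one : ‖ν‖ = 1
  norm_gradient_le : ∀ x ∈ halfBall ν A, ‖∇ v x‖ ≤ C₀ * ⟪ν, x⟫ ^ (-β)
  le_rpow : ∀ x ∈ halfBall ν A, v x ≤ C₀ * (⟪ν, x⟫ + 2 * η) ^ (1 - β)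
  neg_le : ∀ x ∈ halfBall ν A, -η ≤ v x

variable {p β C₀ A η a τ κ c : ℝ} {ν : E} {v g : E → ℝ}

lemma isCompact_truncatedSlab (ν : E) (A c L : ℝ) : IsCompact (truncatedSlab ν A c L) :=
  (isCompact_closedBall 0 A).inter_right (isClosed_Icc.preimage (by fun_prop))

lemma IsSolutionOn.mono {K K' : ℝ} {S S' : Set E} (hs : IsSolutionOn p K S v g) (hS : S' ⊆ S)
    (ho : IsOpen S') (hK : K ≤ K') : IsSolutionOn p K' S' v g where
  isOpen := ho
  contDiffOn := hs.contDiffOn.mono hS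
  equation x hx := hs.equation x (hS hx)
  abs_le x hx := (hs.abs_le x (hS hx)).trans hK
  abs_sub_le x hx y hy := (hs.abs_sub_le x (hS hx) y (hS hy)).trans (by gcongr)

namespace HalfBallModel

lemma mono {A' η' : ℝ} (hm : HalfBallModel p β C₀ A η ν v g) (hβ : β < 1) (hC₀ : 0 < C₀)
    (hη : 0 ≤ η) (hA : A' ≤ A) (hηη' : η ≤ η') : HalfBallModel p β C₀ A' η' ν v g where
  isSolutionOn := hm.isSolutionOn.mono (halfBall_subset_halfBall hA) (isOpen_halfBall ν A') hηη'
  norm_eq_one := hm.norm_eq_one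
  norm_gradient_le x hx := hm.norm_gradient_le x (halfBall_subset_halfBall hA hx)
  le_rpow x hx := (hm.le_rpow x (halfBall_subset_halfBall hA hx)).trans <| by
    have := hx.1
    have : 0 ≤ 1 - β := by linarith
    gcongr
  neg_le x hx := (neg_le_neg hηη').trans (hm.neg_le x (halfBall_subset_halfBall hA hx))

lemma inner_self (hm : HalfBallModel p β C₀ A η ν v g) : ⟪ν, ν⟫ = 1 := by
  rw [real_inner_self_eq_norm_sq, hm.norm_eq_one, one_pow]

lemma inner_gradient_le (hm : HalfBallModel p β C₀ A η ν v g) {x : E} (hx : x ∈ halfBall ν A) :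
    ⟪∇ v x, ν⟫ ≤ C₀ * ⟪ν, x⟫ ^ (-β) :=
  calc ⟪∇ v x, ν⟫ ≤ ‖∇ v x‖ * ‖ν‖ := real_inner_le_norm _ _
    _ = ‖∇ v x‖ := by rw [hm.norm_eq_one, mul_one]
    _ ≤ C₀ * ⟪ν, x⟫ ^ (-β) := hm.norm_gradient_le x hx

lemma norm_gradient_rpow_le (hm : HalfBallModel p β C₀ A η ν v g) (hp : 1 < p)
    (hβ : β * (p - 1) = 1) (hC₀ : 0 < C₀) {x : E} (hx : x ∈ halfBall ν A) :
    ‖∇ v x‖ ^ (p - 1) ≤ C₀ ^ (p - 1) * ⟪ν, x⟫⁻¹ := by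
  rw [← mul_rpow_neg_rpow_sub_one hβ hC₀.le hx.1.le]
  exact Real.rpow_le_rpow (norm_nonneg _) (hm.norm_gradient_le x hx) (by linarith)

end HalfBallModel

lemma hasGradLaplacianAt_normal_test (hν : ‖ν‖ = 1) {x : E} (hx : τ < ⟪ν, x⟫) :
    HasGradLaplacianAt (fun x => a * (⟪ν, x⟫ - τ) ^ (-β) + (c + κ * ‖x‖ ^ 2))
      (-(a * β * (⟪ν, x⟫ - τ) ^ (-β - 1)) • ν + (2 * κ) • x)
      (a * β * (β + 1) * (⟪ν, x⟫ - τ) ^ (-β - 2) + 2 * κ * Module.finrank ℝ E) x := by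
  have hlin : HasGradLaplacianAt (fun x => ⟪ν, x⟫ - τ) ν 0 x := by
    simpa using (HasGradLaplacianAt.inner_left ν).sub (.const τ)
  have hsq : HasGradLaplacianAt (fun x => ‖x‖ ^ 2) ((2 : ℝ) • x) (2 * Module.finrank ℝ E) x := by
    simpa using HasGradLaplacianAt.norm_sub_sq (0 : E)
  refine (((hlin.rpow_const (sub_pos.mpr hx)).const_mul a).add
    ((HasGradLaplacianAt.const c).add (hsq.const_mul κ))).congr_data ?_ ?_
  · module
  · rw [hν]
    ring

lemma HalfBallModel.normal_inequality (hm : HalfBallModel p β C₀ A η ν v g) (hp : 2 < p)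
    (hβ : β * (p - 1) = 1) (hC₀ : 0 < C₀) (ha : 0 < a) (hτ : 0 < τ) (hκ : 0 ≤ κ) {x : E}
    (hx : x ∈ halfBall ν A) (hτx : τ < ⟪ν, x⟫) (hlow : a * (⟪ν, x⟫ - τ) ^ (-β) ≤ ⟪∇ v x, ν⟫)
    (hmax : IsLocalMax
      (fun x => ⟪∇ v x, ν⟫ - (a * (⟪ν, x⟫ - τ) ^ (-β) + (c + κ * ‖x‖ ^ 2))) x) :
    a * (β + 1) * (a ^ (p - 1) - β) * (⟪ν, x⟫ - τ) ^ (-β - 2)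
      ≤ 2 * κ * Module.finrank ℝ E + 2 * κ * p * C₀ ^ (p - 1) * ‖x‖ / τ + η := by
  have hprinciple := hm.isSolutionOn.directional_principle hp hx
    (hasGradLaplacianAt_normal_test hm.norm_eq_one hτx) hmax
  have hs : 0 < ⟪ν, x⟫ - τ := sub_pos.mpr hτx
  have hpow := hm.norm_gradient_rpow_le (by linarith) hβ hC₀ hx
  set s := ⟪ν, x⟫ - τ
  set r := ‖∇ v x‖
  set z := ⟪∇ v x, ν⟫ with hz
  have hβ₀ : 0 < β := pos_of_mul_pos_left (hβ ▸ one_pos) (by linarith)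
  have hzr : z ≤ r := (real_inner_le_norm _ _).trans_eq (by rw [hm.norm_eq_one, mul_one])
  have hz₀ : 0 ≤ z := le_trans (by positivity) hlow
  have hnormal : a ^ (p - 1) * s⁻¹ ≤ r ^ (p - 2) * z :=
    calc a ^ (p - 1) * s⁻¹ = (a * s ^ (-β)) ^ (p - 1) :=
          (mul_rpow_neg_rpow_sub_one hβ ha.le hs.le).symm
      _ ≤ z ^ (p - 1) := Real.rpow_le_rpow (by positivity) hlow (by linarith)
      _ = z ^ (p - 2) * z := rpow_sub_one_eq_mul hz₀ (by linarith)
      _ ≤ r ^ (p - 2) * z := by gcongr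
  have hradial : r ^ (p - 2) * ⟪∇ v x, x⟫ ≤ C₀ ^ (p - 1) * ‖x‖ / τ :=
    calc r ^ (p - 2) * ⟪∇ v x, x⟫ ≤ r ^ (p - 2) * (r * ‖x‖) := by
          gcongr
          exact real_inner_le_norm _ _
      _ = r ^ (p - 1) * ‖x‖ := by rw [rpow_sub_one_eq_mul (norm_nonneg _) (by linarith)]; ring
      _ ≤ C₀ ^ (p - 1) * τ⁻¹ * ‖x‖ := by
          gcongr
          exact hpow.trans (by gcongr)
      _ = C₀ ^ (p - 1) * ‖x‖ / τ := by ring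
  have hsβ : s ^ (-β - 1) * s⁻¹ = s ^ (-β - 2) := by
    rw [← Real.rpow_neg_one, ← Real.rpow_add hs]
    ring_nf
  rw [inner_add_right, inner_smul_right, inner_smul_right, ← hz, hm.norm_eq_one] at hprinciple
  have h₁ := mul_le_mul_of_nonneg_left hnormal (by positivity : 0 ≤ p * a * β * s ^ (-β - 1))
  have h₂ := mul_le_mul_of_nonneg_left hradial (by positivity : 0 ≤ 2 * κ * p)
  have hpβ : p * β = β + 1 := by linarith
  have h₃ : p * a * β * s ^ (-β - 1) * (a ^ (p - 1) * s⁻¹)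
      = a * (β + 1) * a ^ (p - 1) * s ^ (-β - 2) := by
    rw [← hsβ, ← hpβ]
    ring
  have h₄ : 2 * κ * p * C₀ ^ (p - 1) * ‖x‖ / τ = 2 * κ * p * (C₀ ^ (p - 1) * ‖x‖ / τ) := by ring
  linarith

lemma HalfBallModel.not_isLocalMax_normal (hm : HalfBallModel p β C₀ A η ν v g) (hp : 2 < p)
    (hβ : β * (p - 1) = 1) (hC₀ : 0 < C₀) (ha : 0 < a) (haβ : β < a ^ (p - 1)) (hτ : 0 < τ)
    (hκ : 0 ≤ κ) {L A' : ℝ} {x : E} (hx : x ∈ halfBall ν A) (hτx : τ < ⟪ν, x⟫) (hL : ⟪ν, x⟫ ≤ L)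
    (hxA' : ‖x‖ ≤ A') (hlow : a * (⟪ν, x⟫ - τ) ^ (-β) ≤ ⟪∇ v x, ν⟫)
    (hlarge : 2 * κ * Module.finrank ℝ E + 2 * κ * p * C₀ ^ (p - 1) * A' / τ + η
      < a * (β + 1) * (a ^ (p - 1) - β) * L ^ (-β - 2)) :
    ¬IsLocalMax (fun x => ⟪∇ v x, ν⟫ - (a * (⟪ν, x⟫ - τ) ^ (-β) + (c + κ * ‖x‖ ^ 2))) x := by
  intro hmax
  have hβ₀ : 0 < β := pos_of_mul_pos_left (hβ ▸ one_pos) (by linarith)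
  have hineq := hm.normal_inequality hp hβ hC₀ ha hτ hκ hx hτx hlow hmax
  have hpow : L ^ (-β - 2) ≤ (⟪ν, x⟫ - τ) ^ (-β - 2) :=
    Real.rpow_le_rpow_of_nonpos (by linarith) (by linarith) (by linarith)
  have hcoef : 0 ≤ a * (β + 1) * (a ^ (p - 1) - β) :=
    mul_nonneg (by positivity) (sub_nonneg.mpr haβ.le)
  have hnorm : 2 * κ * p * C₀ ^ (p - 1) * ‖x‖ / τ ≤ 2 * κ * p * C₀ ^ (p - 1) * A' / τ := by
    gcongr
  linarith [mul_le_mul_of_nonneg_left hpow hcoef]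

lemma HalfBallModel.inner_gradient_normal_le (hm : HalfBallModel p β C₀ A η ν v g) (hp : 2 < p)
    (hβ : β * (p - 1) = 1) (hC₀ : 0 < C₀) (ha : 0 < a) (haβ : β < a ^ (p - 1)) (hτ : 0 < τ)
    {q L A' : ℝ} (hq : 0 < q) (hqτ : C₀ * τ ^ (-β) ≤ a * q ^ (-β))
    (hκA' : κ * A' ^ 2 = C₀ * τ ^ (-β)) (hτq : τ + q ≤ 1) (hL : 1 ≤ L) (hA' : 1 ≤ A')
    (hA'A : A' < A) (hlarge : 2 * κ * Module.finrank ℝ E + 2 * κ * p * C₀ ^ (p - 1) * A' / τ + η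
      < a * (β + 1) * (a ^ (p - 1) - β) * L ^ (-β - 2)) :
    ⟪∇ v ν, ν⟫ ≤ a * (1 - τ) ^ (-β) + (C₀ * L ^ (-β) + κ) := by
  have hβ₀ : 0 < β := pos_of_mul_pos_left (hβ ▸ one_pos) (by linarith)
  have hκ : 0 ≤ κ := nonneg_of_mul_nonneg_left (hκA' ▸ by positivity) (by positivity : 0 < A' ^ 2)
  have hTS : truncatedSlab ν A' (τ + q) L ⊆ halfBall ν A :=
    truncatedSlab_subset_halfBall (by positivity) hA'A
  have hcont : ContinuousOn (fun x : E => ⟪∇ v x, ν⟫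
      - (a * (⟪ν, x⟫ - τ) ^ (-β) + (C₀ * L ^ (-β) + κ * ‖x‖ ^ 2)))
      (truncatedSlab ν A' (τ + q) L) := fun x hx =>
    ((((hm.isSolutionOn.continuousOn_gradient.mono hTS) x hx).inner continuousWithinAt_const).sub
      (hasGradLaplacianAt_normal_test hm.norm_eq_one
        (by linarith [hx.2.1])).contDiffAt.continuousAt.continuousWithinAt)
  have hν := nonpos_of_forall_not_isLocalMax (isCompact_truncatedSlab ν A' (τ + q) L)
    hcont (fun x hx hpos => ?_) ν
    ⟨by simpa [hm.norm_eq_one] using hA', by simpa [hm.norm_eq_one] using ⟨hτq, hL⟩⟩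
  · simp only [hm.inner_self, hm.norm_eq_one] at hν
    linarith
  have hsτ : 0 < ⟪ν, x⟫ - τ := by linarith [hx.2.1]
  have hz := hm.inner_gradient_le (hTS hx)
  have hzτ : ⟪∇ v x, ν⟫ ≤ C₀ * τ ^ (-β) := hz.trans <| mul_le_mul_of_nonneg_left
    (Real.rpow_le_rpow_of_nonpos hτ (by linarith) (by linarith)) hC₀.le
  have h₁ : 0 ≤ a * (⟪ν, x⟫ - τ) ^ (-β) := by positivity
  have h₂ : 0 ≤ C₀ * L ^ (-β) := by positivity
  have h₃ : 0 ≤ κ * ‖x‖ ^ 2 := by positivity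
  have hlow : ⟪ν, x⟫ ≠ τ + q := fun h => by
    rw [h, add_sub_cancel_left] at hpos
    linarith
  have hhigh : ⟪ν, x⟫ ≠ L := fun h => by
    rw [h] at hz
    linarith
  have hfar : ‖x‖ ≠ A' := fun h => by
    rw [h] at hpos
    linarith
  exact ⟨truncatedSlab_mem_nhds hx hfar hlow hhigh,
    hm.not_isLocalMax_normal hp hβ hC₀ ha haβ hτ hκ (hTS hx) (by linarith) hx.2.2
      (mem_closedBall_zero_iff.mp hx.1) (by linarith) hlarge⟩

theorem exists_forall_halfBallModel_inner_gradient_normal_le (hp : 2 < p) (hβ : β * (p - 1) = 1)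
    (hC₀ : 0 < C₀) (ha : 0 < a) (haβ : β < a ^ (p - 1)) {σ : ℝ} (hσ : 0 < σ) :
    ∃ A η : ℝ, 0 < η ∧ ∀ (ν : E) (v g : E → ℝ), HalfBallModel p β C₀ A η ν v g →
      ⟪∇ v ν, ν⟫ ≤ a + σ := by
  have hβ₀ : 0 < β := pos_of_mul_pos_left (hβ ▸ one_pos) (by linarith)
  have hτlim : ∀ᶠ τ : ℝ in 𝓝[>] 0, a * (1 - τ) ^ (-β) < a + σ / 3 := by
    have hcont : ContinuousAt (fun τ : ℝ => a * (1 - τ) ^ (-β)) 0 :=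
      .const_mul (.rpow_const (by fun_prop) (by norm_num)) a
    exact nhdsWithin_le_nhds (hcont.eventually_lt_const (by simpa using hσ))
  obtain ⟨τ, hτlim, hτ₀, hτ₁⟩ :=
    (hτlim.and (Ioc_mem_nhdsGT (by norm_num : (0 : ℝ) < 1 / 2))).exists
  have hqlim : ∀ᶠ q in 𝓝[>] 0, C₀ * τ ^ (-β) ≤ a * q ^ (-β) :=
    ((tendsto_rpow_neg_nhdsGT_zero (neg_lt_zero.mpr hβ₀)).const_mul_atTop ha).eventually_ge_atTop _
  obtain ⟨q, hqτ, hq₀, hq₁⟩ :=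
    (hqlim.and (Ioc_mem_nhdsGT (by norm_num : (0 : ℝ) < 1 / 2))).exists
  have hLlim : Tendsto (fun L : ℝ => C₀ * L ^ (-β)) atTop (𝓝 0) := by
    simpa using (tendsto_rpow_neg_atTop hβ₀).const_mul C₀
  obtain ⟨L, hL, hL₁⟩ := ((hLlim.eventually_lt_const (by linarith : 0 < σ / 3)).and
    (eventually_ge_atTop 1)).exists
  set θ := a * (β + 1) * (a ^ (p - 1) - β) * L ^ (-β - 2)
  have hθ : 0 < θ := by
    have := sub_pos.mpr haβ
    positivity
  set B := C₀ * τ ^ (-β)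
  have hκlim : Tendsto (fun A' : ℝ => B / A' ^ 2) atTop (𝓝 0) :=
    tendsto_const_nhds.div_atTop (tendsto_pow_atTop two_ne_zero)
  have herror : Tendsto (fun A' : ℝ => 2 * (B / A' ^ 2) * Module.finrank ℝ E
      + 2 * B * p * C₀ ^ (p - 1) / τ / A') atTop (𝓝 0) := by
    simpa using ((hκlim.const_mul 2).mul_const (Module.finrank ℝ E : ℝ)).add
      (tendsto_const_nhds.div_atTop tendsto_id)
  obtain ⟨A', hκA', herrorA', hA'⟩ := ((hκlim.eventually_lt_const (by linarith : 0 < σ / 3)).and <|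
    (herror.eventually_lt_const (half_pos hθ)).and (eventually_ge_atTop 1)).exists
  refine ⟨A' + 1, θ / 2, half_pos hθ, fun ν v g hm => ?_⟩
  have hA'₀ : A' ≠ 0 := by positivity
  have hmain := hm.inner_gradient_normal_le hp hβ hC₀ ha haβ hτ₀ hq₀ hqτ 
    (div_mul_cancel₀ B (pow_ne_zero 2 hA'₀)) (by linarith) hL₁ hA' (by linarith) ?_
  · linarith
  calc 2 * (B / A' ^ 2) * Module.finrank ℝ E + 2 * (B / A' ^ 2) * p * C₀ ^ (p - 1) * A' / τ + θ / 2
      = 2 * (B / A' ^ 2) * Module.finrank ℝ E + 2 * B * p * C₀ ^ (p - 1) / τ / A' + θ / 2 := by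
        field_simp
    _ < θ / 2 + θ / 2 := by gcongr
    _ = θ := add_halves θ

end HalfBallModel

section Shift

variable {p β C₀ A η τ κ b c m L Λ A' : ℝ} {S : Set E} {K : ℝ} {ν x e w : E} {v g : E → ℝ}

lemma IsSolutionOn.comparison_principle (hp : 1 < p) (hs : IsSolutionOn p K S v g)
    {R : E ≃ₗᵢ[ℝ] E} {ψ : E → ℝ} {Q : E} {l : ℝ} (hx : x ∈ S) (hy : R x + w ∈ S)
    (hψ : HasGradLaplacianAt ψ Q l x) (hmax : IsLocalMax (fun z => v z - v (R z + w) - ψ z) x) :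
    ∇ v x - R.symm (∇ v (R x + w)) = Q ∧
      -(p * ‖∇ v x‖ ^ (p - 1) * ‖∇ v x - ∇ v (R x + w)‖) - 2 * K ≤ l := by
  have hcomp : HasGradLaplacianAt (fun z => v (R z + w)) (R.symm (∇ v (R x + w)))
      (-(‖∇ v (R x + w)‖ ^ p + g (R x + w))) x := by
    simpa [add_comm] using (show HasGradLaplacianAt v _ _ (w + (1 : ℝ) • R x) by
      simpa [add_comm] using hs.hasGradLaplacianAt hy).comp_affine
  obtain ⟨hgrad, hlap⟩ :=
    (((hs.hasGradLaplacianAt hx).sub hcomp).sub hψ).eq_zero_and_nonpos_of_isLocalMax hmax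
  refine ⟨sub_eq_zero.mp hgrad, ?_⟩
  have hpow := norm_rpow_sub_norm_rpow_le hp (∇ v x) (∇ v (R x + w))
  have hgx := _root_.abs_le.mp (hs.abs_le x hx)
  have hgy := _root_.abs_le.mp (hs.abs_le _ hy)
  linarith

lemma hasGradLaplacianAt_shift_test (hν : ‖ν‖ = 1) :
    HasGradLaplacianAt (fun x => m + κ * ‖x‖ ^ 2 + b * (Real.exp (Λ * L) - Real.exp (Λ * ⟪ν, x⟫)))
      ((2 * κ) • x - (b * Λ * Real.exp (Λ * ⟪ν, x⟫)) • ν)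
      (2 * κ * Module.finrank ℝ E - b * Λ ^ 2 * Real.exp (Λ * ⟪ν, x⟫)) x := by
  have hexp := ((HasGradLaplacianAt.inner_left (x := x) ν).const_mul Λ).exp
  have hsq : HasGradLaplacianAt (fun x => ‖x‖ ^ 2) ((2 : ℝ) • x) (2 * Module.finrank ℝ E) x := by
    simpa using HasGradLaplacianAt.norm_sub_sq (0 : E)
  refine (((HasGradLaplacianAt.const m).add (hsq.const_mul κ)).add
    (((HasGradLaplacianAt.const _).sub hexp).const_mul b)).congr_data ?_ ?_
  · module
  · rw [norm_smul, hν, mul_one, Real.norm_eq_abs, sq_abs]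
    ring

lemma IsSolutionOn.shift_inequality (hp : 1 < p) (hs : IsSolutionOn p K S v g) (hν : ‖ν‖ = 1)
    (hx : x ∈ S) (hy : x + w ∈ S) (hΛ : p * ‖∇ v x‖ ^ (p - 1) ≤ Λ - 1) (hb : 0 ≤ b) (hκ : 0 ≤ κ)
    (hνx : 0 ≤ ⟪ν, x⟫)
    (hmax : IsLocalMax (fun x => v x - v (x + w)
      - (m + κ * ‖x‖ ^ 2 + b * (Real.exp (Λ * L) - Real.exp (Λ * ⟪ν, x⟫)))) x) :
    b ≤ 2 * κ * Module.finrank ℝ E + 2 * K + (Λ - 1) * (2 * κ * ‖x‖) := by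
  have hΛ₁ : 1 ≤ Λ := sub_nonneg.mp (le_trans (by positivity) hΛ)
  obtain ⟨hgrad, hlap⟩ : ∇ v x - ∇ v (x + w) = _ ∧
      -(p * ‖∇ v x‖ ^ (p - 1) * ‖∇ v x - ∇ v (x + w)‖) - 2 * K ≤ _ :=
    hs.comparison_principle hp (R := .refl ℝ E) hx hy (hasGradLaplacianAt_shift_test hν) hmax
  set X := Real.exp (Λ * ⟪ν, x⟫)
  have hnorm : ‖∇ v x - ∇ v (x + w)‖ ≤ 2 * κ * ‖x‖ + b * Λ * X := by
    rw [hgrad]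
    refine (norm_sub_le _ _).trans_eq ?_
    rw [norm_smul, norm_smul, hν, Real.norm_of_nonneg (by positivity),
      Real.norm_of_nonneg (by positivity), mul_one]
  have hprod := mul_le_mul hΛ hnorm (norm_nonneg _) (sub_nonneg.mpr hΛ₁)
  have hX : 1 ≤ Λ * X := one_le_mul_of_one_le_of_one_le hΛ₁ (Real.one_le_exp (by positivity))
  nlinarith [mul_le_mul_of_nonneg_left hX hb]

namespace HalfBallModel

lemma abs_sub_le_of_le_inner (hm : HalfBallModel p β C₀ A η ν v g) (hβ : 0 < β) (hC₀ : 0 < C₀)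
    (hL : 0 < L) {y : E} (hxL : L ≤ ⟪ν, x⟫) (hxA : ‖x‖ < A) (hyL : L ≤ ⟪ν, y⟫) (hyA : ‖y‖ < A) :
    |v x - v y| ≤ C₀ * L ^ (-β) * ‖x - y‖ := by
  have hconv : Convex ℝ ({z | L ≤ ⟪ν, z⟫} ∩ ball (0 : E) A) :=
    (convex_halfSpace_ge (innerSL ℝ ν).isLinear L).inter (convex_ball 0 A)
  have hmem : ∀ z ∈ {z | L ≤ ⟪ν, z⟫} ∩ ball (0 : E) A, z ∈ halfBall ν A := fun z hz =>
    ⟨hL.trans_le hz.1, mem_ball_zero_iff.mp hz.2⟩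
  refine hconv.norm_image_sub_le_of_norm_hasFDerivWithin_le (fun z hz =>
    (hm.isSolutionOn.hasGradLaplacianAt (hmem z hz)).hasGradientAt.hasFDerivAt.hasFDerivWithinAt)
    (fun z hz => ?_) ⟨hyL, mem_ball_zero_iff.mpr hyA⟩ ⟨hxL, mem_ball_zero_iff.mpr hxA⟩
  rw [LinearIsometryEquiv.norm_map]
  exact (hm.norm_gradient_le z (hmem z hz)).trans <| mul_le_mul_of_nonneg_left
    (Real.rpow_le_rpow_of_nonpos hL hz.1 (by linarith)) hC₀.le

lemma sub_le_rpow_add (hm : HalfBallModel p β C₀ A η ν v g) {y : E} (hx : x ∈ halfBall ν A)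
    (hy : y ∈ halfBall ν A) : v x - v y ≤ C₀ * (⟪ν, x⟫ + 2 * η) ^ (1 - β) + η := by
  linarith [hm.le_rpow x hx, hm.neg_le y hy]

lemma truncatedSlab_mem_nhds_of_lt_sub_shift (hm : HalfBallModel p β C₀ A η ν v g) (hβ₀ : 0 < β)
    (hβ₁ : β < 1) (hC₀ : 0 < C₀) (hη : 0 ≤ η) (he : ‖e‖ = 1) (hνe : 0 ≤ ⟪ν, e⟫)
    (hτ : τ ∈ Icc (0 : ℝ) 1) (hc : 0 < c) (hκ : 0 ≤ κ) (hA : A' + 1 < A)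
    (hlow : C₀ * (c + 2 * η) ^ (1 - β) + η ≤ m) (hhigh : C₀ * L ^ (-β) ≤ m)
    (hfar : C₀ * (L + 2 * η) ^ (1 - β) + η ≤ m + κ * A' ^ 2)
    (hx : x ∈ truncatedSlab ν A' c L) (hlt : m + κ * ‖x‖ ^ 2 < v x - v (x + τ • e)) :
    truncatedSlab ν A' c L ∈ 𝓝 x := by
  have hxS := truncatedSlab_subset_halfBall hc (by linarith : A' < A) hx
  obtain ⟨hyS, hinner⟩ := add_smul_mem_halfBall hx hc hA he hνe hτ
  have hκx : 0 ≤ κ * ‖x‖ ^ 2 := by positivity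
  have hupper := hm.sub_le_rpow_add hxS hyS
  refine truncatedSlab_mem_nhds hx (fun h => ?_) (fun h => ?_) fun h => ?_
  · have hpow : C₀ * (⟪ν, x⟫ + 2 * η) ^ (1 - β) ≤ C₀ * (L + 2 * η) ^ (1 - β) := by
      have := hxS.1
      have : 0 ≤ 1 - β := by linarith
      gcongr
      exact hx.2.2
    rw [h] at hlt
    linarith
  · rw [h] at hupper
    linarith
  · have hL : 0 < L := h ▸ hxS.1
    have hdiff := (le_abs_self _).trans <| hm.abs_sub_le_of_le_inner hβ₀ hC₀ hL h.ge hxS.2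
      (h.ge.trans hinner) hyS.2
    rw [sub_add_cancel_left, norm_neg, norm_smul, he, mul_one, Real.norm_of_nonneg hτ.1] at hdiff
    linarith [mul_le_of_le_one_right (by positivity : 0 ≤ C₀ * L ^ (-β)) hτ.2]

lemma sub_shift_le (hm : HalfBallModel p β C₀ A η ν v g) (hp : 2 < p) (hβ : β * (p - 1) = 1)
    (hC₀ : 0 < C₀) (hη : 0 ≤ η) (he : ‖e‖ = 1) (hνe : 0 ≤ ⟪ν, e⟫) (hτ : τ ∈ Icc (0 : ℝ) 1)
    (hc : 0 < c) (hb : 0 ≤ b) (hκ : 0 ≤ κ) (hA : A' + 1 < A)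
    (hΛ : p * (C₀ ^ (p - 1) * c⁻¹) ≤ Λ - 1)
    (hlarge : 2 * κ * Module.finrank ℝ E + 2 * η + (Λ - 1) * (2 * κ * A') < b)
    (hlow : C₀ * (c + 2 * η) ^ (1 - β) + η ≤ m) (hhigh : C₀ * L ^ (-β) ≤ m)
    (hfar : C₀ * (L + 2 * η) ^ (1 - β) + η ≤ m + κ * A' ^ 2) (hx : x ∈ truncatedSlab ν A' c L) :
    v x - v (x + τ • e)
      ≤ m + κ * ‖x‖ ^ 2 + b * (Real.exp (Λ * L) - Real.exp (Λ * ⟪ν, x⟫)) := by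
  have hΛ₁ : 0 ≤ Λ - 1 := le_trans (by positivity) hΛ
  have hβ₀ : 0 < β := pos_of_mul_pos_left (hβ ▸ one_pos) (by linarith)
  have hβ₁ : β < 1 := by nlinarith
  have hTS := truncatedSlab_subset_halfBall (ν := ν) (L := L) hc (by linarith : A' < A)
  have hTS' : ∀ x ∈ truncatedSlab ν A' c L, x + τ • e ∈ halfBall ν A := fun x hx =>
    (add_smul_mem_halfBall hx hc hA he hνe hτ).1
  have hcont : ContinuousOn (fun x => v x - v (x + τ • e)
      - (m + κ * ‖x‖ ^ 2 + b * (Real.exp (Λ * L) - Real.exp (Λ * ⟪ν, x⟫))))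
      (truncatedSlab ν A' c L) :=
    ((hm.isSolutionOn.continuousOn.mono hTS).sub
      (hm.isSolutionOn.continuousOn.comp (by fun_prop) hTS')).sub (by fun_prop)
  refine sub_nonpos.mp (nonpos_of_forall_not_isLocalMax (isCompact_truncatedSlab ν A' c L) hcont
    (fun x hx hpos => ⟨?_, fun hmax => ?_⟩) x hx)
  · have hexp : 0 ≤ b * (Real.exp (Λ * L) - Real.exp (Λ * ⟪ν, x⟫)) := mul_nonneg hb <|
      sub_nonneg.mpr <| Real.exp_le_exp.mpr <| mul_le_mul_of_nonneg_left hx.2.2 (by linarith)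
    exact hm.truncatedSlab_mem_nhds_of_lt_sub_shift hβ₀ hβ₁ hC₀ hη he hνe hτ hc hκ hA hlow hhigh
      hfar hx (by linarith)
  · have hpow : ‖∇ v x‖ ^ (p - 1) ≤ C₀ ^ (p - 1) * c⁻¹ :=
      (hm.norm_gradient_rpow_le (by linarith) hβ hC₀ (hTS hx)).trans (by gcongr; exact hx.2.1)
    have hineq := hm.isSolutionOn.shift_inequality (by linarith) hm.norm_eq_one (hTS hx) (hTS' x hx)
      (le_trans (by gcongr) hΛ) hb hκ (hTS hx).1.le hmax
    have : (Λ - 1) * (2 * κ * ‖x‖) ≤ (Λ - 1) * (2 * κ * A') := by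
      gcongr
      exact mem_closedBall_zero_iff.mp hx.1
    linarith

end HalfBallModel

lemma exists_mul_rpow_add_lt (hβ : β < 1) (hm : 0 < m) (C₀ : ℝ) :
    ∃ c ∈ Ioc (0 : ℝ) (3 / 4), C₀ * (c + 2 * c) ^ (1 - β) + c < m := by
  have hcont : ContinuousAt (fun c : ℝ => C₀ * (c + 2 * c) ^ (1 - β) + c) 0 :=
    (ContinuousAt.const_mul (.rpow_const (by fun_prop) (.inr (by linarith))) C₀).add
      continuousAt_id
  have hlim : ∀ᶠ c : ℝ in 𝓝[>] 0, C₀ * (c + 2 * c) ^ (1 - β) + c < m :=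
    nhdsWithin_le_nhds (hcont.eventually_lt_const (by
      simpa [Real.zero_rpow (by linarith : 1 - β ≠ 0)] using hm))
  exact (Eventually.and (Ioc_mem_nhdsGT (by norm_num)) hlim).exists

lemma exists_mul_div_sq_add_lt (hm : 0 < m) (B a N C₁ X : ℝ) :
    ∃ A' ≥ 2, B / A' ^ 2 * a + (2 * (B / A' ^ 2) * N + C₁ * (2 * (B / A' ^ 2) * A')) * X < m := by
  have hκ : Tendsto (fun A' : ℝ => B / A' ^ 2) atTop (𝓝 0) :=
    tendsto_const_nhds.div_atTop (tendsto_pow_atTop two_ne_zero)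
  have hκA' : Tendsto (fun A' : ℝ => 2 * (B / A' ^ 2) * A') atTop (𝓝 0) := by
    refine (tendsto_const_nhds.div_atTop tendsto_id : Tendsto (fun A' => 2 * B / A') _ _).congr'
      ?_
    filter_upwards [eventually_ne_atTop 0] with A' hA'
    field_simp
  have hlim := (hκ.mul_const a).add
    ((((hκ.const_mul 2).mul_const N).add (hκA'.const_mul C₁)).mul_const X)
  exact ((eventually_ge_atTop 2).and (hlim.eventually_lt_const (by simpa using hm))).exists

theorem exists_forall_halfBallModel_sub_shift_le (hp : 2 < p) (hβ : β * (p - 1) = 1) (hC₀ : 0 < C₀)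
    (hm : 0 < m) :
    ∃ A η : ℝ, 0 < η ∧ ∀ (ν : E) (v g : E → ℝ), HalfBallModel p β C₀ A η ν v g →
      ∀ e : E, ‖e‖ = 1 → 0 ≤ ⟪ν, e⟫ → ∀ τ ∈ Icc (0 : ℝ) 1, ∀ x ∈ closedBall ν (1 / 4),
        v x - v (x + τ • e) ≤ 2 * m := by
  have hβ₀ : 0 < β := pos_of_mul_pos_left (hβ ▸ one_pos) (by linarith)
  have hβ₁ : β < 1 := by nlinarith
  obtain ⟨c, ⟨hc₀, hc₁⟩, hcm⟩ := exists_mul_rpow_add_lt hβ₁ hm C₀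
  have hLlim : Tendsto (fun L : ℝ => C₀ * L ^ (-β)) atTop (𝓝 0) := by
    simpa using (tendsto_rpow_neg_atTop hβ₀).const_mul C₀
  obtain ⟨L, hLm, hL⟩ := ((hLlim.eventually_lt_const hm).and (eventually_ge_atTop 2)).exists
  set C₁ := p * (C₀ ^ (p - 1) * c⁻¹)
  set X := Real.exp ((C₁ + 1) * L)
  set B := C₀ * (L + 2) ^ (1 - β) + 1
  set N : ℝ := (Module.finrank ℝ E : ℝ)
  obtain ⟨A', hA', hA'm⟩ := exists_mul_div_sq_add_lt (half_pos hm) B ((5 / 4) ^ 2) N C₁ X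
  have hA'₀ : A' ≠ 0 := by positivity
  set κ := B / A' ^ 2 with hκ_def
  have hκ : 0 ≤ κ := by positivity
  set η := min c (min 1 (m / (6 * X)))
  have hη : 0 < η := by positivity
  have hηc : η ≤ c := min_le_left _ _
  have hη₁ : η ≤ 1 := (min_le_right _ _).trans (min_le_left _ _)
  have hηX : 3 * η * X ≤ m / 2 := by
    have : η ≤ m / (6 * X) := (min_le_right _ _).trans (min_le_right _ _)
    rw [le_div_iff₀ (by positivity)] at this
    linarith
  refine ⟨A' + 2, η, hη, fun ν v g hmodel e he hνe τ hτ x hx => ?_⟩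
  have hx' := closedBall_subset_truncatedSlab hmodel.norm_eq_one _ hx
  have hlow : C₀ * (c + 2 * η) ^ (1 - β) + η ≤ m := le_trans (by
    have : 0 ≤ 1 - β := by linarith
    gcongr) hcm.le
  have hfar : C₀ * (L + 2 * η) ^ (1 - β) + η ≤ m + κ * A' ^ 2 := by
    have : 0 ≤ 1 - β := by linarith
    rw [hκ_def, div_mul_cancel₀ _ (pow_ne_zero 2 hA'₀)]
    calc C₀ * (L + 2 * η) ^ (1 - β) + η ≤ C₀ * (L + 2 * 1) ^ (1 - β) + 1 := by gcongr
      _ ≤ m + B := by rw [mul_one]; linarith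
  have hmain := hmodel.sub_shift_le hp hβ hC₀ hη.le he hνe hτ hc₀
    (b := 2 * κ * N + C₁ * (2 * κ * A') + 3 * η) (Λ := C₁ + 1) (by positivity) hκ (by linarith)
    (by linarith) (by linarith) hlow hLm.le hfar
    (truncatedSlab_mono (by linarith) (by linarith) (by linarith) hx')
  have hexp : Real.exp ((C₁ + 1) * L) - Real.exp ((C₁ + 1) * ⟪ν, x⟫) ≤ X :=
    sub_le_self _ (Real.exp_pos _).le
  have hxn : ‖x‖ ≤ 5 / 4 := (mem_closedBall_zero_iff.mp hx'.1).trans (by norm_num)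
  calc v x - v (x + τ • e) ≤ m + κ * (5 / 4) ^ 2 + (2 * κ * N + C₁ * (2 * κ * A') + 3 * η) * X :=
        hmain.trans (by gcongr)
    _ ≤ 2 * m := by linarith

end Shift

section Doubling

variable {p β C₀ A η τ m : ℝ} {S : Set E} {K Λ : ℝ} {ν x e : E} {v g : E → ℝ}

/-- The penalty subtracted from `v x - v (x + τ • e)` when the variables `(x, τ)` are doubled: it
localizes `x` near `ν` and `τ` near `0`. -/
def doublingPenalty {F : Type*} [NormedAddCommGroup F] (ν : F) (m Λ : ℝ) (z : F × ℝ) : ℝ :=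
  2 * m * (16 * ‖z.1 - ν‖ ^ 2 + Λ * (1 - Real.exp (-z.2)))

lemma closedBall_prod_Icc_mem_nhds {F : Type*} [NormedAddCommGroup F] {ν : F} {z : F × ℝ}
    (hm : 0 < m) (hΛ : 4 ≤ Λ) (hz : z ∈ closedBall ν (1 / 4) ×ˢ Icc (0 : ℝ) 1) (hz₀ : z.2 ≠ 0)
    (hlt : doublingPenalty ν m Λ z < 2 * m) :
    closedBall ν (1 / 4) ×ˢ Icc (0 : ℝ) 1 ∈ 𝓝 z := by
  have hlt₁ : 16 * ‖z.1 - ν‖ ^ 2 + Λ * (1 - Real.exp (-z.2)) < 1 :=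
    lt_of_mul_lt_mul_left (hlt.trans_eq (mul_one _).symm) (by positivity)
  have hz₁ : z.2 ≠ 1 := fun h => by
    have hexp : Real.exp (-1) ≤ 1 / 2 := by
      rw [Real.exp_neg, one_div]
      exact inv_anti₀ two_pos (by linarith [Real.add_one_le_exp (1 : ℝ)])
    rw [h] at hlt₁
    nlinarith [sq_nonneg ‖z.1 - ν‖]
  have hzν : ‖z.1 - ν‖ ≠ 1 / 4 := fun h => by
    have hexp : Real.exp (-z.2) ≤ 1 := Real.exp_le_one_iff.mpr (neg_nonpos.mpr hz.2.1)
    rw [h] at hlt₁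
    nlinarith
  refine prod_mem_nhds (closedBall_mem_nhds_of_mem ?_)
    (Icc_mem_nhds (hz.2.1.lt_of_ne' hz₀) (hz.2.2.lt_of_ne hz₁))
  exact mem_ball_iff_norm.mpr ((mem_closedBall_iff_norm.mp hz.1).lt_of_ne hzν)

lemma hasGradLaplacianAt_doublingPenalty_left :
    HasGradLaplacianAt (fun z => doublingPenalty ν m Λ (z, τ)) ((64 * m) • (x - ν))
      (64 * m * Module.finrank ℝ E) x := by
  unfold doublingPenalty
  refine ((((HasGradLaplacianAt.norm_sub_sq ν).const_mul 16).add
    (.const (Λ * (1 - Real.exp (-τ))))).const_mul (2 * m)).congr_data ?_ ?_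
  · module
  · ring

lemma hasGradLaplacianAt_doublingPenalty_reflection (he : ‖e‖ = 1) :
    HasGradLaplacianAt (fun z => doublingPenalty ν m Λ (z, τ - 2 * ⟪e, z - x⟫))
      ((64 * m) • (x - ν) - (4 * m * Λ * Real.exp (-τ)) • e)
      (64 * m * Module.finrank ℝ E - 8 * m * Λ * Real.exp (-τ)) x := by
  have hexp := (((HasGradLaplacianAt.inner_left (x := x) e).const_mul 2).add
    (.const (-(τ + 2 * ⟪e, x⟫)))).exp
  have hτ : ∀ z, 2 * ⟪e, z⟫ + -(τ + 2 * ⟪e, x⟫) = -(τ - 2 * ⟪e, z - x⟫) := fun z => by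
    rw [inner_sub_right]
    ring
  simp only [hτ] at hexp
  unfold doublingPenalty
  refine ((((HasGradLaplacianAt.norm_sub_sq ν).const_mul 16).add
    (((HasGradLaplacianAt.const 1).sub hexp).const_mul Λ)).const_mul (2 * m)).congr_data ?_ ?_
  · simp only [sub_self, inner_zero_right, mul_zero, sub_zero]
    module
  · simp only [sub_self, inner_zero_right, mul_zero, sub_zero, add_zero, norm_smul, he]
    norm_num
    ring

/- Moving `x` with `τ` fixed identifies the gradients at `x` and `x + τ • e`. Moving `x` while
`x + τ • e` moves by the reflected vector makes `τ` vary at speed `-2 ⟪e, ·⟫`, and only then does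
the concavity of the penalty in `τ` enter the Laplacian. -/
lemma IsSolutionOn.doubling_inequality (hp : 1 < p) (hs : IsSolutionOn p K S v g) (hm : 0 ≤ m)
    (he : ‖e‖ = 1) (hx : x ∈ S) (hy : x + τ • e ∈ S)
    (hmax : IsLocalMax (fun z : E × ℝ => v z.1 - v (z.1 + z.2 • e) - doublingPenalty ν m Λ z)
      (x, τ)) :
    8 * m * Λ * Real.exp (-τ) ≤
      p * ‖∇ v x‖ ^ (p - 1) * (64 * m * ‖x - ν‖) + 2 * K + 64 * m * Module.finrank ℝ E := by
  have hgrad : ∇ v x - ∇ v (x + τ • e) = (64 * m) • (x - ν) :=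
    (hs.comparison_principle hp (R := .refl ℝ E) (w := τ • e) hx hy
      hasGradLaplacianAt_doublingPenalty_left
      (hmax.comp_continuous (g := fun z => (z, τ)) (by fun_prop))).1
  have hmove : ∀ z, z + (τ - 2 * ⟪e, z - x⟫) • e =
      (ℝ ∙ e)ᗮ.reflection z + (τ + 2 * ⟪e, x⟫) • e := fun z => by
    rw [reflection_orthogonal_singleton_apply he, inner_sub_right]
    module
  have hyx : (ℝ ∙ e)ᗮ.reflection x + (τ + 2 * ⟪e, x⟫) • e = x + τ • e := by
    simpa using (hmove x).symm
  have hmax' : IsLocalMax (fun z => v z - v ((ℝ ∙ e)ᗮ.reflection z + (τ + 2 * ⟪e, x⟫) • e)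
      - doublingPenalty ν m Λ (z, τ - 2 * ⟪e, z - x⟫)) x := by
    simp only [← hmove]
    have hmax_moved : IsLocalMax (fun z : E × ℝ => v z.1 - v (z.1 + z.2 • e)
        - doublingPenalty ν m Λ z) (x, τ - 2 * ⟪e, x - x⟫) := by simpa using hmax
    exact hmax_moved.comp_continuous (g := fun z => (z, τ - 2 * ⟪e, z - x⟫)) (by fun_prop)
  have hlap := (hs.comparison_principle hp hx (hyx ▸ hy)
    (hasGradLaplacianAt_doublingPenalty_reflection he) hmax').2
  rw [hyx, hgrad, norm_smul, Real.norm_of_nonneg (by positivity)] at hlap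
  linarith

namespace HalfBallModel

lemma not_isLocalMax_doubling (hmodel : HalfBallModel p β C₀ A η ν v g) (hp : 1 < p)
    (hβ : β * (p - 1) = 1) (hC₀ : 0 < C₀) (hm : 0 < m) (hηm : η ≤ m) (he : ‖e‖ = 1)
    (hΛ : Λ = 64 * Module.finrank ℝ E + 4 + 22 * (p * C₀ ^ (p - 1)))
    (hτ : τ ≤ 1) (hx : x ∈ halfBall ν A) (hy : x + τ • e ∈ halfBall ν A)
    (hxν : x ∈ closedBall ν (1 / 4)) (hinner : 3 / 4 ≤ ⟪ν, x⟫) :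
    ¬ IsLocalMax (fun z : E × ℝ => v z.1 - v (z.1 + z.2 • e) - doublingPenalty ν m Λ z) (x, τ) := by
  intro hmax
  have hineq := hmodel.isSolutionOn.doubling_inequality hp hm.le he hx hy hmax
  have hpow : ‖∇ v x‖ ^ (p - 1) ≤ C₀ ^ (p - 1) * (3 / 4)⁻¹ :=
    (hmodel.norm_gradient_rpow_le hp hβ hC₀ hx).trans (by gcongr)
  have hdrift : p * ‖∇ v x‖ ^ (p - 1) * (64 * m * ‖x - ν‖) ≤
      p * (C₀ ^ (p - 1) * (3 / 4)⁻¹) * (64 * m * (1 / 4)) := by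
    gcongr
    exact mem_closedBall_iff_norm.mp hxν
  have hexp : 1 / 3 ≤ Real.exp (-τ) := by
    rw [Real.exp_neg, one_div]
    exact inv_anti₀ (Real.exp_pos _)
      ((Real.exp_le_exp.mpr hτ).trans (by linarith [Real.exp_one_lt_d9]))
  have hΛ₀ : 0 ≤ Λ := by
    rw [hΛ]
    positivity
  have hlower : 8 * m * Λ * (1 / 3) ≤ 8 * m * Λ * Real.exp (-τ) := by gcongr
  have hN : 0 ≤ m * (Module.finrank ℝ E : ℝ) := by positivity
  have hP : 0 ≤ m * (p * C₀ ^ (p - 1)) := by positivity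
  rw [hΛ] at hlower
  rw [hΛ] at hineq
  linarith

lemma sub_le_doublingPenalty (hmodel : HalfBallModel p β C₀ A η ν v g) (hp : 1 < p)
    (hβ : β * (p - 1) = 1) (hC₀ : 0 < C₀) (hm : 0 < m) (hηm : η ≤ m) (hA : 9 / 4 < A)
    (he : ‖e‖ = 1) (hνe : 0 ≤ ⟪ν, e⟫)
    (hΛ : Λ = 64 * Module.finrank ℝ E + 4 + 22 * (p * C₀ ^ (p - 1)))
    (hshift : ∀ τ ∈ Icc (0 : ℝ) 1, ∀ x ∈ closedBall ν (1 / 4), v x - v (x + τ • e) ≤ 2 * m)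
    {z : E × ℝ} (hz : z ∈ closedBall ν (1 / 4) ×ˢ Icc 0 1) :
    v z.1 - v (z.1 + z.2 • e) ≤ doublingPenalty ν m Λ z := by
  have hΛ₄ : 4 ≤ Λ := by
    have : 0 ≤ 22 * (p * C₀ ^ (p - 1)) := by positivity
    have : 0 ≤ 64 * (Module.finrank ℝ E : ℝ) := by positivity
    linarith
  have hslab := closedBall_subset_truncatedSlab hmodel.norm_eq_one (1 / 4)
  have hQ : ∀ z ∈ closedBall ν (1 / 4) ×ˢ Icc (0 : ℝ) 1,
      z.1 ∈ halfBall ν A ∧ z.1 + z.2 • e ∈ halfBall ν A := fun z hz =>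
    ⟨truncatedSlab_subset_halfBall (by norm_num) (by linarith) (hslab hz.1),
      (add_smul_mem_halfBall (hslab hz.1) (by norm_num) (by linarith) he hνe hz.2).1⟩
  have hcont : ContinuousOn (fun z : E × ℝ => v z.1 - v (z.1 + z.2 • e) - doublingPenalty ν m Λ z)
      (closedBall ν (1 / 4) ×ˢ Icc 0 1) := by
    unfold doublingPenalty
    exact ((hmodel.isSolutionOn.continuousOn.comp (by fun_prop) fun z hz => (hQ z hz).1).sub
      (hmodel.isSolutionOn.continuousOn.comp (by fun_prop) fun z hz => (hQ z hz).2)).sub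
      (by fun_prop)
  refine sub_nonpos.mp (nonpos_of_forall_not_isLocalMax
    ((isCompact_closedBall _ _).prod isCompact_Icc) hcont (fun z hz hpos => ⟨?_, ?_⟩) z hz)
  · have hlt : doublingPenalty ν m Λ z < v z.1 - v (z.1 + z.2 • e) := sub_pos.mp hpos
    refine closedBall_prod_Icc_mem_nhds hm hΛ₄ hz (fun h₀ => ?_)
      (hlt.trans_le (hshift z.2 hz.2 z.1 hz.1))
    simp only [doublingPenalty, h₀, zero_smul, add_zero, neg_zero, Real.exp_zero, sub_self,
      mul_zero] at hlt
    exact hlt.not_ge (by positivity)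
  · exact hmodel.not_isLocalMax_doubling hp hβ hC₀ hm hηm he hΛ hz.2.2 (hQ z hz).1 (hQ z hz).2
      hz.1 ((by norm_num : (3 / 4 : ℝ) ≤ 1 - 1 / 4).trans (hslab hz.1).2.1)

lemma neg_inner_gradient_normal_le (hmodel : HalfBallModel p β C₀ A η ν v g) (hp : 1 < p)
    (hβ : β * (p - 1) = 1) (hC₀ : 0 < C₀) (hm : 0 < m) (hηm : η ≤ m) (hA : 9 / 4 < A)
    (he : ‖e‖ = 1) (hνe : 0 ≤ ⟪ν, e⟫)
    (hshift : ∀ τ ∈ Icc (0 : ℝ) 1, ∀ x ∈ closedBall ν (1 / 4), v x - v (x + τ • e) ≤ 2 * m) :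
    -⟪∇ v ν, e⟫ ≤ 2 * m * (64 * Module.finrank ℝ E + 4 + 22 * (p * C₀ ^ (p - 1))) := by
  set Λ := 64 * Module.finrank ℝ E + 4 + 22 * (p * C₀ ^ (p - 1)) with hΛ
  have hΛ₀ : 0 ≤ Λ := by positivity
  have hνA : ν ∈ halfBall ν A := by
    simpa [halfBall, hmodel.inner_self, hmodel.norm_eq_one] using (by linarith : 1 < A)
  have hderiv : HasLineDerivAt ℝ v ⟪∇ v ν, e⟫ ν e := by
    simpa using (hmodel.isSolutionOn.hasGradLaplacianAt
      hνA).hasGradientAt.hasFDerivAt.hasLineDerivAt e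
  refine le_of_tendsto (HasDerivAt.tendsto_slope_zero_right hderiv).neg ?_
  filter_upwards [Ioc_mem_nhdsGT one_pos] with τ hτ
  have hle : v ν - v (ν + τ • e) ≤ 2 * m * (Λ * (1 - Real.exp (-τ))) := by
    simpa [doublingPenalty] using hmodel.sub_le_doublingPenalty hp hβ hC₀ hm hηm hA he hνe hΛ hshift
      (z := (ν, τ)) ⟨mem_closedBall_self (by norm_num), hτ.1.le, hτ.2⟩
  have hexp : 2 * m * (Λ * (1 - Real.exp (-τ))) ≤ 2 * m * (Λ * τ) := by
    gcongr
    linarith [Real.add_one_le_exp (-τ)]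
  rw [zero_add, zero_smul, add_zero, smul_eq_mul, ← mul_neg, inv_mul_le_iff₀ hτ.1]
  linarith

end HalfBallModel

end Doubling

section Optimality

variable {p β C₀ ε : ℝ}

theorem exists_forall_halfBallModel_norm_gradient_normal_le (hp : 2 < p) (hβ : β * (p - 1) = 1)
    (hC₀ : 0 < C₀) (hε : 0 < ε) :
    ∃ A η : ℝ, 0 < A ∧ 0 < η ∧ η ≤ 1 ∧ η ≤ ε ∧ ∀ (ν : E) (v g : E → ℝ),
      HalfBallModel p β C₀ A η ν v g → ‖∇ v ν‖ ≤ (1 + ε) * β ^ β := by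
  have hβ₀ : 0 < β := pos_of_mul_pos_left (hβ ▸ one_pos) (by linarith)
  have hβ₁ : β < 1 := by nlinarith
  set d := β ^ β
  have hd₀ : 0 < d := by positivity
  have hd : d ^ (p - 1) = β := by rw [← Real.rpow_mul hβ₀.le, hβ, Real.rpow_one]
  have ha : β < ((1 + ε / 4) * d) ^ (p - 1) := by
    conv_lhs => rw [← hd]
    exact Real.rpow_lt_rpow (by positivity)
      (lt_mul_of_one_lt_left (by positivity) (by linarith)) (by linarith)
  set Λ := 64 * Module.finrank ℝ E + 4 + 22 * (p * C₀ ^ (p - 1))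
  have hΛ : 0 < Λ := by positivity
  set m := ε * d / 4 / (2 * Λ) with hm_def
  have hm : 0 < m := by positivity
  obtain ⟨A₁, η₁, hη₁, hnormal⟩ := exists_forall_halfBallModel_inner_gradient_normal_le (E := E)
    hp hβ hC₀ (by positivity) ha (by positivity : 0 < ε * d / 4)
  obtain ⟨A₂, η₂, hη₂, hshift⟩ := exists_forall_halfBallModel_sub_shift_le (E := E) hp hβ hC₀ hm
  set η := min (min 1 ε) (min m (min η₁ η₂))
  have hη : 0 < η := by positivity
  have hηm : η ≤ m := (min_le_right _ _).trans (min_le_left _ _)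
  have hηη : η ≤ min η₁ η₂ := (min_le_right _ _).trans (min_le_right _ _)
  have hεd : 0 < ε * d := by positivity
  refine ⟨max 3 (max A₁ A₂), η, by positivity, hη, (min_le_left _ _).trans (min_le_left _ _),
    (min_le_left _ _).trans (min_le_right _ _), fun ν v g hmodel => ?_⟩
  have hmodel₁ : HalfBallModel p β C₀ A₁ η₁ ν v g := hmodel.mono hβ₁ hC₀ hη.le
    ((le_max_left _ _).trans (le_max_right _ _)) (hηη.trans (min_le_left _ _))
  have hmodel₂ : HalfBallModel p β C₀ A₂ η₂ ν v g := hmodel.mono hβ₁ hC₀ hη.le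
    ((le_max_right _ _).trans (le_max_right _ _)) (hηη.trans (min_le_right _ _))
  have hneg : ∀ e : E, ‖e‖ = 1 → 0 ≤ ⟪ν, e⟫ → -⟪∇ v ν, e⟫ ≤ ε * d / 4 := fun e he hνe => by
    refine (hmodel.neg_inner_gradient_normal_le (by linarith) hβ hC₀ hm hηm
      (lt_max_of_lt_left (by norm_num)) he hνe (hshift ν v g hmodel₂ e he hνe)).trans_eq ?_
    change 2 * m * Λ = ε * d / 4
    rw [hm_def]
    field_simp
  have := norm_le_of_inner_le hmodel.norm_eq_one (by positivity) (by linarith)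
    (hnormal ν v g hmodel₁) hneg
  linarith

end Optimality

section Scaling

variable {p β K l D : ℝ} {S : Set E} {z : E} {v g : E → ℝ}

namespace IsSolutionOn

lemma hasGradLaplacianAt_scale (hs : IsSolutionOn p K S v g) (hl : 0 < l) {x : E}
    (hx : z + l • x ∈ S) :
    HasGradLaplacianAt (fun x => l ^ (β - 1) * v (z + l • x)) (l ^ β • ∇ v (z + l • x))
      (l ^ (1 + β) * -(‖∇ v (z + l • x)‖ ^ p + g (z + l • x))) x := by
  have hpow₁ : l ^ (β - 1) * l = l ^ β := by rw [← Real.rpow_add_one hl.ne', sub_add_cancel]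
  have hpow₂ : l ^ β * l = l ^ (1 + β) := by rw [← Real.rpow_add_one hl.ne', add_comm]
  refine ((hs.hasGradLaplacianAt hx).comp_add_smul.const_mul _).congr_data ?_ ?_
  · rw [smul_smul, hpow₁]
  · rw [← hpow₂, ← hpow₁]
    ring

lemma scale (hs : IsSolutionOn p K S v g) (hβ : β * (p - 1) = 1) (hl : 0 < l)
    (hl₁ : l ≤ 1) (z : E) :
    IsSolutionOn p (l ^ β * K) ((fun x => z + l • x) ⁻¹' S) (fun x => l ^ (β - 1) * v (z + l • x))
      (fun x => l ^ (1 + β) * g (z + l • x)) where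
  isOpen := hs.isOpen.preimage (by fun_prop)
  contDiffOn := contDiffOn_const.mul (hs.contDiffOn.comp (by fun_prop) fun _ hx => hx)
  equation x hx := by
    have hx' := hs.hasGradLaplacianAt_scale (β := β) hl hx
    rw [hx'.laplacian_eq, hx'.gradient_eq, norm_smul, Real.norm_of_nonneg (by positivity),
      Real.mul_rpow (by positivity) (norm_nonneg _), ← Real.rpow_mul hl.le,
      (by linarith : β * p = 1 + β)]
    ring
  abs_le x hx := by
    have hpow : l ^ (1 + β) ≤ l ^ β := Real.rpow_le_rpow_of_exponent_ge hl hl₁ (by linarith)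
    rw [abs_mul, abs_of_pos (by positivity)]
    gcongr
    exact hs.abs_le _ hx
  abs_sub_le x hx y hy := by
    have hpow : l ^ (1 + β) ≤ l ^ β := Real.rpow_le_rpow_of_exponent_ge hl hl₁ (by linarith)
    have hxy := hs.abs_sub_le _ hx _ hy
    have hK : 0 ≤ K := (abs_nonneg _).trans (hs.abs_le _ hx)
    rw [add_sub_add_left_eq_sub, ← smul_sub, norm_smul, Real.norm_of_nonneg hl.le] at hxy
    rw [← mul_sub, abs_mul, abs_of_pos (by positivity), mul_assoc]
    refine mul_le_mul hpow (hxy.trans ?_) (abs_nonneg _) (by positivity)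
    gcongr
    exact mul_le_of_le_one_left (norm_nonneg _) hl₁

end IsSolutionOn

theorem exists_norm_gradient_le_of_ball_subset (hp : 2 < p) (hβ : β * (p - 1) = 1) (hK : 0 ≤ K)
    (hD : 0 < D) :
    ∃ C > 0, ∀ (S : Set E) (v g : E → ℝ), IsSolutionOn p K S v g →
      ∀ (x : E) (d : ℝ), 0 < d → d ≤ D → ball x d ⊆ S → ‖∇ v x‖ ≤ C * d ^ (-β) := by
  have hβ₀ : 0 < β := pos_of_mul_pos_left (hβ ▸ one_pos) (by linarith)
  obtain ⟨C, hC, hbound⟩ := exists_norm_gradient_zero_le (E := E) hp hβ hK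
  set c := min (1 / 2) (1 / D)
  have hc : 0 < c := by positivity
  refine ⟨C * c ^ (-β), by positivity, fun S v g hs x d hd hdD hball => ?_⟩
  have hl : 0 < c * d := by positivity
  have hl₁ : c * d ≤ 1 := calc
    c * d ≤ 1 / D * D := by gcongr; exact min_le_right _ _
    _ = 1 := one_div_mul_cancel hD.ne'
  have hld : c * d < d := mul_lt_of_lt_one_left hd ((min_le_left _ _).trans_lt (by norm_num))
  have hsub : closedBall 0 1 ⊆ (fun y => x + (c * d) • y) ⁻¹' S := fun y hy => hball <| by
    rw [mem_ball_iff_norm, add_sub_cancel_left, norm_smul, Real.norm_of_nonneg hl.le]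
    exact (mul_le_of_le_one_right hl.le (mem_closedBall_zero_iff.mp hy)).trans_lt hld
  have hscale := (hs.scale hβ hl hl₁ x).mono subset_rfl (hs.isOpen.preimage (by fun_prop))
    (mul_le_of_le_one_left hK (Real.rpow_le_one hl.le hl₁ hβ₀.le))
  have hle := hbound _ _ _ hscale hsub
  rw [(hs.hasGradLaplacianAt_scale hl (hsub (mem_closedBall_self zero_le_one))).gradient_eq,
    norm_smul, Real.norm_of_nonneg (by positivity), smul_zero, add_zero] at hle
  rw [mul_assoc, ← Real.mul_rpow hc.le hd.le, Real.rpow_neg hl.le, ← div_eq_mul_inv,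
    le_div_iff₀ (by positivity)]
  linarith

end Scaling

section BoundaryEstimates

open scoped Real

variable {Ω : Set E} {p K M R C D α β : ℝ} {u f : E → ℝ} {c x y z : E}

section RadialBarrier

variable {F : Type*} [NormedAddCommGroup F]

/-- The exponential barrier `e^{-α R²} - e^{-α |y - c|²}`, which vanishes on the sphere of radius
`R` about `c` and is strictly superharmonic away from `c` when `α` is large. -/
def radialBarrier (α R : ℝ) (c y : F) : ℝ := Real.exp (-(α * R ^ 2)) - Real.exp (-(α * ‖y - c‖ ^ 2))

lemma continuous_radialBarrier (α R : ℝ) (c : F) : Continuous (radialBarrier α R c) := by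
  unfold radialBarrier
  fun_prop

lemma radialBarrier_nonneg {c y : F} (hα : 0 ≤ α) (hR : 0 ≤ R) (hy : R ≤ ‖y - c‖) :
    0 ≤ radialBarrier α R c y := by
  rw [radialBarrier, sub_nonneg]
  gcongr

lemma radialBarrier_le {c y : F} (hα : 0 ≤ α) (hR : 0 ≤ R) (hy : R ≤ ‖y - c‖) :
    radialBarrier α R c y ≤ α * (‖y - c‖ ^ 2 - R ^ 2) := by
  set s := α * (‖y - c‖ ^ 2 - R ^ 2)
  have hs : 0 ≤ s := mul_nonneg hα (sub_nonneg.mpr (by gcongr))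
  calc radialBarrier α R c y
      = Real.exp (-(α * R ^ 2)) * (1 - Real.exp (-s)) := by
        rw [radialBarrier, mul_sub, mul_one, ← Real.exp_add]
        congr 3
        ring
    _ ≤ 1 * s := by
        refine mul_le_mul (Real.exp_le_one_iff.mpr (by simpa using by positivity)) ?_ ?_ zero_le_one
        · linarith [Real.add_one_le_exp (-s)]
        · exact sub_nonneg.mpr (Real.exp_le_one_iff.mpr (neg_nonpos.mpr hs))
    _ = s := one_mul s

end RadialBarrier

lemma exists_hasGradLaplacianAt_radialBarrier (α R : ℝ) (c x : E) :
    ∃ G, HasGradLaplacianAt (radialBarrier α R c) G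
      (-(2 * α * Real.exp (-(α * ‖x - c‖ ^ 2)) *
        (2 * (α * ‖x - c‖ ^ 2) - Module.finrank ℝ E))) x := by
  have hexp := ((HasGradLaplacianAt.norm_sub_sq (x := x) c).const_mul (-α)).exp
  have hsub := (HasGradLaplacianAt.const (x := x) (Real.exp (-(α * R ^ 2)))).sub hexp
  simp only [neg_mul] at hsub
  refine ⟨_, hsub.congr_data rfl ?_⟩
  rw [smul_smul, norm_smul, mul_pow, Real.norm_eq_abs, sq_abs]
  ring

lemma IsSolutionOn.neg_mul_radialBarrier_le (hs : IsSolutionOn p M Ω u f)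
    (hb : Bornology.IsBounded Ω) (hu : ContinuousOn u (closure Ω)) (hu₀ : ∀ x ∈ frontier Ω, u x = 0)
    (hR : 0 ≤ R) (hα : 0 < α) (hK : 0 ≤ K) (hc : ∀ y ∈ closure Ω, R ≤ ‖y - c‖ ∧ ‖y - c‖ ≤ D)
    (hαR : Module.finrank ℝ E + 1 ≤ α * R ^ 2) (hM : M < 2 * K * α * Real.exp (-(α * D ^ 2))) :
    ∀ x ∈ closure Ω, -(K * radialBarrier α R c x) ≤ u x := by
  have hφ : ∀ y ∈ closure Ω, 0 ≤ K * radialBarrier α R c y := fun y hy =>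
    mul_nonneg hK (radialBarrier_nonneg hα.le hR (hc y hy).1)
  suffices h : ∀ x ∈ closure Ω, 0 - u x - K * radialBarrier α R c x ≤ 0 from
    fun x hx => by linarith [h x hx]
  refine nonpos_of_forall_not_isLocalMax hb.isCompact_closure ?_ fun x hx hpos => ?_
  · exact (continuousOn_const.sub hu).sub
      (continuous_const.mul (continuous_radialBarrier α R c)).continuousOn
  have hxΩ : x ∈ Ω := by
    by_contra hxΩ
    have hux := hu₀ x (by rw [hs.isOpen.frontier_eq]; exact ⟨hx, hxΩ⟩)
    linarith [hφ x hx]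
  refine ⟨mem_of_superset (hs.isOpen.mem_nhds hxΩ) subset_closure, fun hmax => ?_⟩
  obtain ⟨G, hG⟩ := exists_hasGradLaplacianAt_radialBarrier α R c x
  have hlap := ((((HasGradLaplacianAt.const 0).sub (hs.hasGradLaplacianAt hxΩ)).sub
    (hG.const_mul K)).eq_zero_and_nonpos_of_isLocalMax hmax).2
  obtain ⟨hRx, hxD⟩ := hc x hx
  set r := ‖x - c‖
  have hcoeff : (1 : ℝ) ≤ 2 * (α * r ^ 2) - Module.finrank ℝ E := by
    have : α * R ^ 2 ≤ α * r ^ 2 := by gcongr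
    linarith [(Nat.cast_nonneg _ : (0 : ℝ) ≤ Module.finrank ℝ E)]
  have hsource : 2 * K * α * Real.exp (-(α * D ^ 2)) ≤
      2 * K * α * Real.exp (-(α * r ^ 2)) * (2 * (α * r ^ 2) - Module.finrank ℝ E) := calc
    _ ≤ 2 * K * α * Real.exp (-(α * r ^ 2)) * 1 := by rw [mul_one]; gcongr
    _ ≤ _ := by gcongr
  linarith [neg_le_of_abs_le (hs.abs_le x hxΩ), Real.rpow_nonneg (norm_nonneg (∇ u x)) p]

theorem exists_neg_mul_norm_sub_le (p : ℝ) (hM : 0 ≤ M) (hR : 0 < R) (hb : Bornology.IsBounded Ω) :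
    ∃ C > 0, ∀ u f : E → ℝ, IsSolutionOn p M Ω u f → ContinuousOn u (closure Ω) →
      (∀ x ∈ frontier Ω, u x = 0) → ∀ z ∈ frontier Ω, ∀ ν : E, TwoSidedBallAt Ω R z ν →
      ∀ x ∈ Ω, -(C * ‖x - z‖) ≤ u x := by
  set α : ℝ := (Module.finrank ℝ E + 1) / R ^ 2 with hα
  set d := diam (closure Ω)
  set e := Real.exp (-(α * (d + R) ^ 2))
  set K := (M + 1) / (2 * α * e) with hK
  have he : 0 < e := Real.exp_pos _
  have hα₀ : 0 < α := by positivity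
  have hK₀ : 0 < K := by positivity
  have hd₀ : 0 ≤ d := diam_nonneg
  have hMK : M < 2 * K * α * e := by
    rw [(by rw [hK]; field_simp : 2 * K * α * e = M + 1)]
    exact lt_add_one M
  refine ⟨K * α * (d + 2 * R), by positivity, fun u f hs hu hu₀ z hz ν hν x hx => ?_⟩
  set c := z - R • ν
  have hdiam : ∀ y ∈ closure Ω, ‖y - z‖ ≤ d := fun y hy => by
    rw [← dist_eq_norm]
    exact dist_le_diam_of_mem hb.closure hy (frontier_subset_closure hz)
  have hyc : ∀ y, ‖y - c‖ ≤ ‖y - z‖ + R := fun y => calc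
    ‖y - c‖ = ‖y - z + R • ν‖ := by congr 1; module
    _ ≤ ‖y - z‖ + ‖R • ν‖ := norm_add_le _ _
    _ = ‖y - z‖ + R := by rw [norm_smul, hν.norm_eq_one, mul_one, Real.norm_of_nonneg hR.le]
  have hxΩ := subset_closure hx
  have hbarrier := hs.neg_mul_radialBarrier_le hb hu hu₀ hR.le hα₀ hK₀.le (D := d + R)
    (fun y hy => ⟨hν.le_norm_sub hy, (hyc y).trans (by linarith [hdiam y hy])⟩)
    (by rw [hα]; field_simp; rfl) hMK x hxΩ
  have hquad : ‖x - c‖ ^ 2 - R ^ 2 ≤ (d + 2 * R) * ‖x - z‖ := by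
    have : ‖x - c‖ ^ 2 ≤ (‖x - z‖ + R) ^ 2 := by gcongr; exact hyc x
    nlinarith [hdiam x hxΩ, norm_nonneg (x - z)]
  have : K * radialBarrier α R c x ≤ K * (α * ((d + 2 * R) * ‖x - z‖)) := by
    gcongr
    exact (radialBarrier_le hα₀.le hR.le (hν.le_norm_sub hxΩ)).trans (by gcongr)
  linarith

lemma le_rpow_of_deriv_le {φ φ' : ℝ → ℝ} {d : ℝ} (hβ : β < 1) (hd : 0 ≤ d)
    (hφ : ContinuousOn φ (Icc 0 d)) (hderiv : ∀ t ∈ Ioo 0 d, HasDerivAt φ (φ' t) t)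
    (hle : ∀ t ∈ Ioo 0 d, φ' t ≤ C * t ^ (-β)) :
    φ d ≤ φ 0 + C / (1 - β) * d ^ (1 - β) := by
  have hβ' : 0 < 1 - β := sub_pos.mpr hβ
  have hdiff : ∀ t ∈ Ioo 0 d,
      HasDerivAt (fun t => φ t - C / (1 - β) * t ^ (1 - β)) (φ' t - C * t ^ (-β)) t := fun t ht =>
    ((hderiv t ht).sub ((Real.hasDerivAt_rpow_const (Or.inl ht.1.ne')).const_mul _)).congr_deriv <|
      by rw [(by ring : 1 - β - 1 = -β)]; field_simp
  have hanti : AntitoneOn (fun t => φ t - C / (1 - β) * t ^ (1 - β)) (Icc 0 d) := by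
    refine antitoneOn_of_deriv_nonpos (convex_Icc 0 d) ?_ ?_ ?_
    · exact hφ.sub (continuousOn_const.mul
        (continuousOn_id.rpow_const fun _ _ => Or.inr hβ'.le))
    · rw [interior_Icc]
      exact fun t ht => (hdiff t ht).differentiableAt.differentiableWithinAt
    · rw [interior_Icc]
      intro t ht
      rw [(hdiff t ht).deriv]
      exact sub_nonpos.mpr (hle t ht)
  have := hanti (left_mem_Icc.mpr hd) (right_mem_Icc.mpr hd) hd
  simp only [Real.zero_rpow hβ'.ne', mul_zero, sub_zero] at this
  linarith

lemma exists_forall_add_smul_mem (hΩ : IsOpen Ω) (hne : (frontier Ω).Nonempty) (hx : x ∈ Ω) :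
    ∃ z ∈ frontier Ω, ∃ e : E, ‖e‖ = 1 ∧ z + infDist x (frontier Ω) • e = x ∧
      ∀ t ∈ Ioc 0 (infDist x (frontier Ω)),
        z + t • e ∈ Ω ∧ t ≤ infDist (z + t • e) (frontier Ω) := by
  obtain ⟨z, hz, hzd⟩ := isClosed_frontier.exists_infDist_eq_dist hne x
  have hd : 0 < infDist x (frontier Ω) := infDist_frontier_pos hΩ hne hx
  set d := infDist x (frontier Ω)
  have hnorm : ‖x - z‖ = d := by rw [hzd, dist_eq_norm]
  have he : ‖d⁻¹ • (x - z)‖ = 1 := by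
    rw [norm_smul, hnorm, norm_inv, Real.norm_of_nonneg hd.le, inv_mul_cancel₀ hd.ne']
  have hx_eq : z + d • d⁻¹ • (x - z) = x := by rw [smul_inv_smul₀ hd.ne', add_sub_cancel]
  refine ⟨z, hz, d⁻¹ • (x - z), he, hx_eq, fun t ht => ?_⟩
  set e := d⁻¹ • (x - z)
  have hdist : dist (z + t • e) x = d - t := by
    rw [← hx_eq, dist_add_left, dist_eq_norm, ← sub_smul, norm_smul, he, mul_one, norm_sub_rev,
      Real.norm_of_nonneg (sub_nonneg.mpr ht.2)]
  refine ⟨ball_infDist_frontier_subset hΩ hx (by rw [mem_ball, hdist]; linarith [ht.1]), ?_⟩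
  have := infDist_le_infDist_add_dist (s := frontier Ω) (x := x) (y := z + t • e)
  rw [dist_comm, hdist] at this
  linarith

lemma le_infDist_frontier_rpow (hΩ : IsOpen Ω) (hne : (frontier Ω).Nonempty) (hβ₀ : 0 ≤ β)
    (hβ : β < 1) (hC : 0 ≤ C) (hdiff : DifferentiableOn ℝ u Ω)
    (hgrad : ∀ x ∈ Ω, ‖∇ u x‖ ≤ C * infDist x (frontier Ω) ^ (-β))
    (hu : ContinuousOn u (closure Ω)) (hu₀ : ∀ x ∈ frontier Ω, u x = 0) (hx : x ∈ Ω) :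
    u x ≤ C / (1 - β) * infDist x (frontier Ω) ^ (1 - β) := by
  obtain ⟨z, hz, e, he, hx_eq, hseg⟩ := exists_forall_add_smul_mem hΩ hne hx
  have hd : 0 < infDist x (frontier Ω) := infDist_frontier_pos hΩ hne hx
  set d := infDist x (frontier Ω)
  have hcl : MapsTo (fun t : ℝ => z + t • e) (Icc 0 d) (closure Ω) := fun t ht => by
    rcases ht.1.eq_or_lt with rfl | ht₀
    · simpa using frontier_subset_closure hz
    · exact subset_closure (hseg t ⟨ht₀, ht.2⟩).1
  have hderiv : ∀ t ∈ Ioo 0 d,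
      HasDerivAt (fun t : ℝ => u (z + t • e)) ⟪∇ u (z + t • e), e⟫ t := fun t ht => by
    have hgrad := (hdiff.differentiableAt (hΩ.mem_nhds (hseg t ⟨ht.1, ht.2.le⟩).1)).hasGradientAt
    exact (hgrad.hasFDerivAt.comp_hasDerivAt t
      (((hasDerivAt_id t).smul_const e).const_add z)).congr_deriv (by simp)
  have hle : ∀ t ∈ Ioo 0 d, ⟪∇ u (z + t • e), e⟫ ≤ C * t ^ (-β) := fun t ht => by
    obtain ⟨hmem, hinf⟩ := hseg t ⟨ht.1, ht.2.le⟩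
    calc ⟪∇ u (z + t • e), e⟫ ≤ ‖∇ u (z + t • e)‖ := by
          simpa [he] using real_inner_le_norm (∇ u (z + t • e)) e
      _ ≤ C * infDist (z + t • e) (frontier Ω) ^ (-β) := hgrad _ hmem
      _ ≤ C * t ^ (-β) := by
        gcongr ?_ * ?_
        exact Real.rpow_le_rpow_of_nonpos ht.1 hinf (neg_nonpos.mpr hβ₀)
  simpa [hx_eq, hu₀ z hz] using
    le_rpow_of_deriv_le hβ hd.le (hu.comp (by fun_prop) hcl) hderiv hle

end BoundaryEstimates

section BlowUp

variable {Ω : Set E} {p M R C C₁ A α β η l ε : ℝ} {u f : E → ℝ} {x z ν : E}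

lemma exists_norm_gradient_le_infDist_frontier (hp : 2 < p) (hβ : β * (p - 1) = 1) (hM : 0 ≤ M)
    (hb : Bornology.IsBounded Ω) (hne : (frontier Ω).Nonempty) :
    ∃ C > 0, ∀ u f : E → ℝ, IsSolutionOn p M Ω u f →
      ∀ x ∈ Ω, ‖∇ u x‖ ≤ C * infDist x (frontier Ω) ^ (-β) := by
  obtain ⟨z, hz⟩ := hne
  obtain ⟨C, hC, h⟩ := exists_norm_gradient_le_of_ball_subset (E := E) hp hβ hM
    (by positivity : 0 < diam (closure Ω) + 1)
  refine ⟨C, hC, fun u f hs x hx => h Ω u f hs x _ (infDist_frontier_pos hs.isOpen ⟨z, hz⟩ hx) ?_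
    (ball_infDist_frontier_subset hs.isOpen hx)⟩
  calc infDist x (frontier Ω) ≤ dist x z := infDist_le_dist_of_mem hz
    _ ≤ diam (closure Ω) :=
      dist_le_diam_of_mem hb.closure (subset_closure hx) (frontier_subset_closure hz)
    _ ≤ diam (closure Ω) + 1 := le_add_of_nonneg_right zero_le_one

lemma rpow_mul_mul_mul_rpow_neg {s : ℝ} (hl : 0 < l) (hs : 0 ≤ s) (C γ : ℝ) :
    l ^ γ * (C * (l * s) ^ (-γ)) = C * s ^ (-γ) := by
  rw [Real.mul_rpow hl.le hs, Real.rpow_neg hl.le]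
  field_simp

lemma rpow_mul_le_of_le_rpow {s t d : ℝ} (hβ : β ≤ 1) (hC : 0 ≤ C) (hl : 0 < l) (hs : 0 ≤ s)
    (hd : 0 ≤ d) (hds : d ≤ l * s) (ht : t ≤ C * d ^ (1 - β)) :
    l ^ (β - 1) * t ≤ C * s ^ (1 - β) := calc
  l ^ (β - 1) * t ≤ l ^ (β - 1) * (C * (l * s) ^ (1 - β)) := by
    gcongr
    exact ht.trans (by gcongr)
  _ = C * s ^ (1 - β) := by
    rw [← neg_sub β 1, rpow_mul_mul_mul_rpow_neg hl hs]

lemma neg_le_rpow_mul_of_neg_le {a t : ℝ} (hl : 0 < l) (hlC : l ^ β * (C * a) ≤ η)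
    (ht : -(C * (l * a)) ≤ t) : -η ≤ l ^ (β - 1) * t := calc
  -η ≤ -(l ^ β * (C * a)) := neg_le_neg hlC
  _ = l ^ (β - 1) * -(C * (l * a)) := by
    rw [Real.rpow_sub_one hl.ne']
    field_simp
  _ ≤ l ^ (β - 1) * t := by gcongr

lemma IsSolutionOn.norm_gradient_scale_le {s d : ℝ} (hs : IsSolutionOn p M Ω u f) (hβ : 0 ≤ β)
    (hC : 0 ≤ C) (hl : 0 < l) (hs₀ : 0 < s) (hx : z + l • x ∈ Ω) (hsd : l * s ≤ d)
    (hgrad : ‖∇ u (z + l • x)‖ ≤ C * d ^ (-β)) :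
    ‖∇ (fun x => l ^ (β - 1) * u (z + l • x)) x‖ ≤ C * s ^ (-β) := by
  rw [(hs.hasGradLaplacianAt_scale hl hx).gradient_eq, norm_smul,
    Real.norm_of_nonneg (by positivity), ← rpow_mul_mul_mul_rpow_neg hl hs₀.le]
  gcongr
  refine hgrad.trans ?_
  gcongr ?_ * ?_
  exact Real.rpow_le_rpow_of_nonpos (by positivity) hsd (neg_nonpos.mpr hβ)

lemma IsSolutionOn.halfBallModel_blowUp (hs : IsSolutionOn p M Ω u f) (hβ : β * (p - 1) = 1)
    (hβ₀ : 0 ≤ β) (hβ₁ : β ≤ 1) (hC : 0 ≤ C) (hC₁ : 0 ≤ C₁)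
    (hgrad : ∀ x ∈ Ω, ‖∇ u x‖ ≤ C * infDist x (frontier Ω) ^ (-β))
    (hup : ∀ x ∈ Ω, u x ≤ C * infDist x (frontier Ω) ^ (1 - β))
    (hz : z ∈ frontier Ω) (hlow : ∀ x ∈ Ω, -(C₁ * ‖x - z‖) ≤ u x)
    (h : TwoSidedBallAt Ω R z ν) (hR : 0 < R) (hη : 0 < η) (hη₁ : η ≤ 1) (hA : 1 ≤ A)
    (hl : 0 < l) (hl₁ : l ≤ 1) (hlA : l * (A + 1) ^ 2 ≤ R * η)
    (hlC : l ^ β * (C₁ * (A + 1)) ≤ η) (hlM : l ^ β * M ≤ η) :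
    HalfBallModel p β C A η ν (fun x => l ^ (β - 1) * u (z + (l * η) • ν + l • x))
      (fun x => l ^ (1 + β) * f (z + (l * η) • ν + l • x)) := by
  have hshift : ∀ x : E, z + l • (x + η • ν) = z + (l * η) • ν + l • x := fun x => by module
  have hdist : ∀ x ∈ halfBall ν A, infDist (z + (l * η) • ν + l • x) (frontier Ω) ∈
      Icc (l * ⟪ν, x⟫) (l * (⟪ν, x⟫ + 2 * η)) := fun x hx => by
    rw [← hshift]
    exact h.infDist_halfBall_mem_Icc hs.isOpen ⟨z, hz⟩ hR hη hη₁ hA hl hlA hx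
  have hmem : ∀ x ∈ halfBall ν A, z + (l * η) • ν + l • x ∈ Ω := fun x hx => by
    rw [← hshift]
    exact h.ball_halfBall_subset hR hη hη₁ hA hl hlA hx (mem_ball_self (mul_pos hl hx.1))
  refine ⟨(hs.scale hβ hl hl₁ _).mono hmem (isOpen_halfBall ν A) hlM, h.norm_eq_one,
    fun x hx => hs.norm_gradient_scale_le hβ₀ hC hl hx.1 (hmem x hx) (hdist x hx).1
      (hgrad _ (hmem x hx)),
    fun x hx => rpow_mul_le_of_le_rpow hβ₁ hC hl
      (add_nonneg (show 0 < ⟪ν, x⟫ from hx.1).le (by positivity)) infDist_nonneg (hdist x hx).2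
      (hup _ (hmem x hx)),
    fun x hx => neg_le_rpow_mul_of_neg_le hl hlC (le_trans ?_ (hlow _ (hmem x hx)))⟩
  rw [← hshift, add_sub_cancel_left]
  gcongr
  exact norm_smul_add_smul_le h.norm_eq_one hη.le hη₁ hl.le hx

lemma IsSolutionOn.norm_gradient_le_of_blowUp {B d : ℝ} (hs : IsSolutionOn p M Ω u f) (hβ : β ≤ 1)
    (hη : 0 ≤ η) (hl : 0 < l) (hld : l * (1 + η) = d) (hx : z + d • ν ∈ Ω)
    (hB : ‖∇ (fun x => l ^ (β - 1) * u (z + (l * η) • ν + l • x)) ν‖ ≤ B) :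
    ‖∇ u (z + d • ν)‖ ≤ (1 + η) * B * d ^ (-β) := by
  have hx_eq : z + (l * η) • ν + l • ν = z + d • ν := by
    rw [← hld]
    module
  rw [(hs.hasGradLaplacianAt_scale hl (hx_eq ▸ hx)).gradient_eq, hx_eq, norm_smul,
    Real.norm_of_nonneg (by positivity)] at hB
  have hB₀ : 0 ≤ B := le_trans (by positivity) hB
  calc ‖∇ u (z + d • ν)‖ = l ^ (-β) * (l ^ β * ‖∇ u (z + d • ν)‖) := by
        rw [Real.rpow_neg hl.le]
        field_simp
    _ ≤ l ^ (-β) * B := by gcongr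
    _ = (1 + η) ^ β * B * d ^ (-β) := by
        rw [← hld, Real.mul_rpow hl.le (by positivity), Real.rpow_neg (by positivity : 0 ≤ 1 + η)]
        field_simp
    _ ≤ (1 + η) * B * d ^ (-β) := by
        have hd : 0 ≤ d := hld ▸ by positivity
        gcongr
        exact (Real.rpow_le_rpow_of_exponent_le (by linarith) hβ).trans_eq (Real.rpow_one _)

lemma exists_one_add_mul_one_add_le (hε : 0 < ε) : ∃ ε' > 0, (1 + ε') * (1 + ε') ≤ 1 + ε :=
  ⟨√(1 + ε) - 1, sub_pos.mpr (Real.lt_sqrt_of_sq_lt (by linarith)), by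
    rw [add_sub_cancel, Real.mul_self_sqrt (by positivity)]⟩

lemma exists_forall_rpow_mul_le (hβ : 0 < β) (hη : 0 < η) (hR : 0 < R) (a b c : ℝ) :
    ∃ d > 0, ∀ l, 0 < l → l ≤ d → l ≤ 1 ∧ l * a ≤ R ∧ l ^ β * b ≤ η ∧ l ^ β * c ≤ η := by
  have hpow : Tendsto (fun l : ℝ => l ^ β) (𝓝 0) (𝓝 0) := by
    simpa [Real.zero_rpow hβ.ne'] using (Real.continuousAt_rpow_const 0 β (Or.inr hβ.le)).tendsto
  have hsmall : ∀ {F : ℝ → ℝ} {r : ℝ}, Tendsto F (𝓝 0) (𝓝 0) → 0 < r → ∀ a : ℝ,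
      ∀ᶠ l in 𝓝 0, F l * a ≤ r := fun hF hr a =>
    (hF.mul_const a).eventually_le_const (by simpa using hr)
  have hall := (eventually_le_nhds (one_pos : (0 : ℝ) < 1)).and ((hsmall tendsto_id hR a).and
    ((hsmall hpow hη b).and (hsmall hpow hη c)))
  obtain ⟨d, hd, h⟩ := mem_nhdsGT_iff_exists_Ioc_subset.mp (mem_nhdsWithin_of_mem_nhds hall)
  exact ⟨d, hd, fun l hl hld => h ⟨hl, hld⟩⟩

lemma exists_norm_gradient_le_and_le_infDist_frontier (hp : 2 < p) (hβ : β * (p - 1) = 1)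
    (hβ₀ : 0 ≤ β) (hβ₁ : β < 1) (hM : 0 ≤ M) (hb : Bornology.IsBounded Ω)
    (hne : (frontier Ω).Nonempty) :
    ∃ C > 0, ∀ u f : E → ℝ, IsSolutionOn p M Ω u f → ContinuousOn u (closure Ω) →
      (∀ x ∈ frontier Ω, u x = 0) → ∀ x ∈ Ω, ‖∇ u x‖ ≤ C * infDist x (frontier Ω) ^ (-β) ∧
        u x ≤ C * infDist x (frontier Ω) ^ (1 - β) := by
  obtain ⟨C, hC, hgrad⟩ := exists_norm_gradient_le_infDist_frontier hp hβ hM hb hne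
  refine ⟨max C (C / (1 - β)), by positivity, fun u f hs hu hu₀ x hx =>
    ⟨(hgrad u f hs x hx).trans ?_, (le_infDist_frontier_rpow hs.isOpen hne hβ₀ hβ₁ hC.le
      (hs.contDiffOn.differentiableOn two_ne_zero) (hgrad u f hs) hu hu₀ hx).trans ?_⟩⟩
  · exact mul_le_mul_of_nonneg_right (le_max_left _ _) (Real.rpow_nonneg infDist_nonneg _)
  · exact mul_le_mul_of_nonneg_right (le_max_right _ _) (Real.rpow_nonneg infDist_nonneg _)

lemma exists_twoSidedBallAt_add_smul_eq (hΩ : IsOpen Ω) (hne : (frontier Ω).Nonempty) (hR : 0 < R)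
    (hball : ∀ z ∈ frontier Ω, ∃ ν, TwoSidedBallAt Ω R z ν) (hx : x ∈ Ω) :
    ∃ z ∈ frontier Ω, ∃ ν, TwoSidedBallAt Ω R z ν ∧ z + infDist x (frontier Ω) • ν = x := by
  obtain ⟨z, hz, hzd⟩ := isClosed_frontier.exists_infDist_eq_dist hne x
  obtain ⟨ν, hν⟩ := hball z hz
  have hxz : x ≠ z := dist_pos.mp (hzd ▸ infDist_frontier_pos hΩ hne hx)
  rw [dist_eq_norm] at hzd
  refine ⟨z, hz, ν, hν, ?_⟩
  rw [hzd, ← hν.eq_add_smul_of_ball_subset hR hxz (hzd ▸ ball_infDist_frontier_subset hΩ hx)]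

theorem exists_norm_gradient_le_of_infDist_frontier_le (hp : 2 < p) (hβ : β * (p - 1) = 1)
    (hM : 0 ≤ M) (hb : Bornology.IsBounded Ω) (hne : (frontier Ω).Nonempty) (hR : 0 < R)
    (hball : ∀ z ∈ frontier Ω, ∃ ν, TwoSidedBallAt Ω R z ν) (hε : 0 < ε) :
    ∃ d > 0, ∀ u f : E → ℝ, IsSolutionOn p M Ω u f → ContinuousOn u (closure Ω) →
      (∀ x ∈ frontier Ω, u x = 0) → ∀ x ∈ Ω, infDist x (frontier Ω) ≤ d →
      ‖∇ u x‖ ≤ (1 + ε) * β ^ β * infDist x (frontier Ω) ^ (-β) := by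
  have hβ₀ : 0 < β := pos_of_mul_pos_left (hβ ▸ one_pos) (by linarith)
  have hβ₁ : β < 1 := by nlinarith
  obtain ⟨C, hC, hup⟩ := exists_norm_gradient_le_and_le_infDist_frontier hp hβ hβ₀.le hβ₁ hM hb hne
  obtain ⟨C₁, hC₁, hlow⟩ := exists_neg_mul_norm_sub_le p hM hR hb
  obtain ⟨ε', hε', hεε'⟩ := exists_one_add_mul_one_add_le hε
  obtain ⟨A, η, -, hη, hη₁, hηε, hmodel⟩ :=
    exists_forall_halfBallModel_norm_gradient_normal_le (E := E) hp hβ hC hε'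
  obtain ⟨d₀, hd₀, hsmall⟩ := exists_forall_rpow_mul_le (R := R * η) hβ₀ hη (by positivity)
    ((max A 1 + 1) ^ 2) (C₁ * (max A 1 + 1)) M
  refine ⟨d₀, hd₀, fun u f hs hu hu₀ x hx hxd => ?_⟩
  obtain ⟨z, hz, ν, hν, hx_eq⟩ := exists_twoSidedBallAt_add_smul_eq hs.isOpen hne hR hball hx
  set d := infDist x (frontier Ω)
  have hd : 0 < d := infDist_frontier_pos hs.isOpen hne hx
  set l := d / (1 + η)
  have hl : 0 < l := by positivity
  have hld : l * (1 + η) = d := div_mul_cancel₀ d (by positivity)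
  obtain ⟨hl₁, hlA, hlC, hlM⟩ := hsmall l hl (by nlinarith)
  have hblow := hs.halfBallModel_blowUp hβ hβ₀.le hβ₁.le hC.le hC₁.le
    (fun y hy => (hup u f hs hu hu₀ y hy).1) (fun y hy => (hup u f hs hu hu₀ y hy).2) hz
    (hlow u f hs hu hu₀ z hz ν hν) hν hR hη hη₁ (le_max_right _ _) hl hl₁ hlA hlC hlM
  have hle := hs.norm_gradient_le_of_blowUp hβ₁.le hη.le hl hld (hx_eq.symm ▸ hx)
    (hmodel ν _ _ (hblow.mono hβ₁ hC hη.le (le_max_left _ _) le_rfl))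
  rw [hx_eq, ← mul_assoc] at hle
  refine hle.trans ?_
  gcongr
  exact le_trans (by gcongr) hεε'

lemma subsingleton_of_frontier_eq_empty {F : Type*} [NormedAddCommGroup F] [NormedSpace ℝ F]
    {S : Set F} (hb : Bornology.IsBounded S) (hne : S.Nonempty) (hS : frontier S = ∅) :
    Subsingleton F := by
  by_contra! hF
  rcases frontier_eq_empty_iff.mp hS with h | h
  · exact hne.ne_empty h
  · exact NormedSpace.unbounded_univ ℝ F (h ▸ hb)

theorem stmt12_general (hp : 2 < p) (hβ : β * (p - 1) = 1) (hM : 0 ≤ M)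
    (hb : Bornology.IsBounded Ω) (hball : ∃ R > 0, ∀ z ∈ frontier Ω, ∃ ν, TwoSidedBallAt Ω R z ν)
    (hε : 0 < ε) :
    ∃ C > 0, ∀ u f : E → ℝ, IsSolutionOn p M Ω u f → ContinuousOn u (closure Ω) →
      (∀ x ∈ frontier Ω, u x = 0) → ∀ x ∈ Ω,
      ‖∇ u x‖ ≤ (1 + ε) * β ^ β * infDist x (frontier Ω) ^ (-β) + C := by
  have hβ₀ : 0 < β := pos_of_mul_pos_left (hβ ▸ one_pos) (by linarith)
  have hmain : ∀ x, 0 ≤ (1 + ε) * β ^ β * infDist x (frontier Ω) ^ (-β) := fun x =>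
    mul_nonneg (by positivity) (Real.rpow_nonneg infDist_nonneg _)
  rcases (frontier Ω).eq_empty_or_nonempty with he | hne
  · refine ⟨1, one_pos, fun u f _ _ _ x hx => ?_⟩
    have := subsingleton_of_frontier_eq_empty hb ⟨x, hx⟩ he
    rw [Subsingleton.elim (∇ u x) 0, norm_zero]
    exact add_nonneg (hmain x) zero_le_one
  obtain ⟨R, hR, hball⟩ := hball
  obtain ⟨d, hd, hnear⟩ :=
    exists_norm_gradient_le_of_infDist_frontier_le hp hβ hM hb hne hR hball hε
  obtain ⟨C, hC, hgrad⟩ := exists_norm_gradient_le_infDist_frontier hp hβ hM hb hne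
  refine ⟨C * d ^ (-β), by positivity, fun u f hs hu hu₀ x hx => ?_⟩
  rcases le_total (infDist x (frontier Ω)) d with hxd | hdx
  · exact (hnear u f hs hu hu₀ x hx hxd).trans (le_add_of_nonneg_right (by positivity))
  · refine ((hgrad u f hs x hx).trans ?_).trans (le_add_of_nonneg_left (hmain x))
    exact mul_le_mul_of_nonneg_left
      (Real.rpow_le_rpow_of_nonpos hd hdx (neg_nonpos.mpr hβ₀.le)) hC.le

end BlowUp

lemma IsSolutionOn.of_lap {n : ℕ} {p M : ℝ} {Ω : Set (EuclideanSpace ℝ (Fin n))}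
    {u f : EuclideanSpace ℝ (Fin n) → ℝ} (hΩ : IsOpen Ω) (hM : 0 ≤ M) (hu : ContDiffOn ℝ 2 u Ω)
    (heq : ∀ x ∈ Ω, -lap u x = ‖∇ u x‖ ^ p + f x) (hf : ∀ x ∈ Ω, |f x| ≤ M)
    (hlip : LipschitzOnWith M.toNNReal f Ω) : IsSolutionOn p M Ω u f where
  isOpen := hΩ
  contDiffOn := hu
  equation x hx := by rw [← lap_eq_laplacian (hu.contDiffAt (hΩ.mem_nhds hx)), heq x hx]
  abs_le := hf
  abs_sub_le x hx y hy := by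
    simpa [Real.dist_eq, dist_eq_norm, hM] using hlip.dist_le_mul x hx y hy

theorem stmt12 {n : ℕ} (hn : 1 ≤ n)
    (p β dp : ℝ) (hp : 2 < p) (hβ : β = 1 / (p - 1)) (hdp : dp = β ^ β)
    (Ω : Set (EuclideanSpace ℝ (Fin n))) (hΩo : IsOpen Ω) (hΩb : Bornology.IsBounded Ω) (hΩc2 : IsC2Boundary Ω)
    (δ : EuclideanSpace ℝ (Fin n) → ℝ) (hδ : ∀ x, δ x = infDist x (frontier Ω))
    (M : ℝ) (hM : 0 < M) :
    ∀ ε > 0, ∃ C > 0, ∀ f u : EuclideanSpace ℝ (Fin n) → ℝ,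
      (∀ x ∈ Ω, |f x| ≤ M) → LipschitzOnWith (Real.toNNReal M) f Ω →
      ContDiffOn ℝ 2 u Ω → ContinuousOn u (closure Ω) →
      (∀ x ∈ Ω, -lap u x = ‖gradient u x‖ ^ p + f x) →
      (∀ x ∈ frontier Ω, u x = 0) →
      ∀ x ∈ Ω, ‖gradient u x‖ ≤ (1 + ε) * dp * (δ x) ^ (-β) + C := by
  intro ε hε
  have hβp : β * (p - 1) = 1 := by rw [hβ, one_div_mul_cancel (by linarith)]
  simp only [hδ, hdp]
  obtain ⟨C, hC, h⟩ :=
    stmt12_general hp hβp hM.le hΩb (hΩc2.exists_forall_twoSidedBallAt hΩb) hε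
  exact ⟨C, hC, fun f u hf hlip hu hu_cont heq hu₀ =>
    h u f (.of_lap hΩo hM.le hu heq hf hlip) hu_cont hu₀⟩
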